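/- arXiv:1101.5355 — 9 statements merged into one kernel-verified Lean document; each statement's English description precedes it below -/
import Mathlib

section
/- Let A = 10000, B = 7500, and α = ε²/B. Then the limiting acceptance probabilities satisfy a(p+ε) − a(p) ≥ 0.01. (This is the quantitative content of the theorem that a two-state quantum finite automaton can distinguish a coin of bias p from a coin of bias p+ε with constant advantage, for arbitrarily small ε.) -/
open MeasureTheory ProbabilityTheory

lemma qfa_integral {Ω : Type*} [MeasurableSpace Ω] (μ : Measure Ω) [IsProbabilityMeasure μ]
    (q a b : ℝ) (hq0 : 0 ≤ q) (hq1 : q ≤ 1) (X : ℕ → Ω → ℝ)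
    (hXmeas : ∀ i, Measurable (X i)) (hXindep : iIndepFun X μ)
    (hXdist : ∀ i, μ.map (X i) =
      ENNReal.ofReal q • Measure.dirac a + ENNReal.ofReal (1 - q) • Measure.dirac b) (t : ℕ) :
    ∫ ω, Real.sin (∑ i ∈ Finset.range t, X i ω) ^ 2 ∂μ =
      1 / 2 - (((q : ℂ) * Complex.exp ((2 * a : ℝ) * Complex.I) +
        ((1 - q : ℝ) : ℂ) * Complex.exp ((2 * b : ℝ) * Complex.I)) ^ t).re / 2 := by
  have h1 : ∀ i, charFun (μ.map (X i)) 2 = (q : ℂ) * Complex.exp ((2 * a : ℝ) * Complex.I) +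
        ((1 - q : ℝ) : ℂ) * Complex.exp ((2 * b : ℝ) * Complex.I) := by
    intro i
    rw [hXdist i, charFun_apply_real, integral_add_measure, integral_smul_measure,
      integral_smul_measure, integral_dirac, integral_dirac, ENNReal.toReal_ofReal hq0,
      ENNReal.toReal_ofReal (by linarith)]
    · simp
    · exact (integrable_dirac (by simp [enorm_lt_top])).smul_measure (by simp)
    · exact (integrable_dirac (by simp [enorm_lt_top])).smul_measure (by simp)
  have h2 := (hXindep.restrict (Finset.range t)).charFun_map_fun_finsetSum_eq_prod
    (fun i _ => (hXmeas i).aemeasurable)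
  have hm : Measurable (fun ω => ∑ i ∈ Finset.range t, X i ω) :=
    Finset.measurable_sum _ (fun i _ => hXmeas i)
  have h3 := congrFun h2 2
  rw [Finset.prod_apply, Finset.prod_congr rfl (fun i _ => h1 i), Finset.prod_const,
    Finset.card_range, charFun_apply_real, integral_map hm.aemeasurable (by fun_prop)] at h3
  rw [← h3]
  have hint : Integrable (fun ω => Complex.exp ((2 : ℝ) * (∑ i ∈ Finset.range t, X i ω : ℝ) * Complex.I)) μ := by
    apply Integrable.of_bound (C := 1) (by fun_prop)
    filter_upwards with ω
    rw [← Complex.ofReal_mul, Complex.norm_exp_ofReal_mul_I]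
  have hre := integral_re hint
  simp only [RCLike.re_to_complex] at hre
  rw [← hre]
  have hintre := hint.re
  simp only [RCLike.re_to_complex] at hintre
  have : ∀ ω, Real.sin (∑ i ∈ Finset.range t, X i ω) ^ 2 = 1 / 2 -
      (Complex.exp ((2 : ℝ) * (∑ i ∈ Finset.range t, X i ω : ℝ) * Complex.I)).re / 2 := by
    intro ω
    rw [← Complex.ofReal_mul, Complex.exp_ofReal_mul_I_re, Real.sin_sq_eq_half_sub]
  simp_rw [this]
  rw [integral_sub (integrable_const _) (hintre.div_const 2)]
  simp only [integral_div]
  simp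

lemma qfa_tsum (α : ℝ) (h0 : 0 < α) (h1 : α < 1) (z : ℂ) (hz : ‖z‖ ≤ 1) :
    ∑' t : ℕ, α * (1 - α) ^ t * (1 / 2 - (z ^ t).re / 2) =
      1 / 2 - α * (1 - (1 - α) * z.re) /
        ((1 - (1 - α) * z.re) ^ 2 + ((1 - α) * z.im) ^ 2) / 2 := by
  have hn : ‖((1 - α : ℝ) : ℂ) * z‖ < 1 := by
    rw [norm_mul, Complex.norm_real, Real.norm_eq_abs, abs_of_pos (by linarith)]
    nlinarith [norm_nonneg z]
  have hs := Complex.hasSum_re (hasSum_geometric_of_norm_lt_one hn)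
  have hr := hasSum_geometric_of_lt_one (r := 1 - α) (by linarith) (by linarith)
  have := (hr.mul_left (α / 2)).sub (hs.mul_left (α / 2))
  have e : ∀ t : ℕ, α * (1 - α) ^ t * (1 / 2 - (z ^ t).re / 2) =
      α / 2 * (1 - α) ^ t - α / 2 * ((((1 - α : ℝ) : ℂ) * z) ^ t).re := by
    intro t
    rw [mul_pow, ← Complex.ofReal_pow, Complex.re_ofReal_mul]
    ring
  simp_rw [e]
  rw [this.tsum_eq, Complex.inv_re, Complex.normSq_apply]
  simp only [Complex.sub_re, Complex.sub_im, Complex.one_re, Complex.one_im,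
    Complex.re_ofReal_mul, Complex.im_ofReal_mul]
  have : α / 2 * (1 - (1 - α))⁻¹ = 1 / 2 := by
    rw [sub_sub_cancel]
    field_simp
  rw [this]
  ring

lemma qfa_value {Ω : Type*} [MeasurableSpace Ω] (μ : Measure Ω) [IsProbabilityMeasure μ]
    (q a b α : ℝ) (hq0 : 0 ≤ q) (hq1 : q ≤ 1) (h0 : 0 < α) (h1 : α < 1) (X : ℕ → Ω → ℝ)
    (hXmeas : ∀ i, Measurable (X i)) (hXindep : iIndepFun X μ)
    (hXdist : ∀ i, μ.map (X i) =
      ENNReal.ofReal q • Measure.dirac a + ENNReal.ofReal (1 - q) • Measure.dirac b) :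
    ∑' t : ℕ, α * (1 - α) ^ t * ∫ ω, Real.sin (∑ i ∈ Finset.range t, X i ω) ^ 2 ∂μ =
      1 / 2 - α * (1 - (1 - α) * (q * Real.cos (2 * a) + (1 - q) * Real.cos (2 * b))) /
        ((1 - (1 - α) * (q * Real.cos (2 * a) + (1 - q) * Real.cos (2 * b))) ^ 2 +
          ((1 - α) * (q * Real.sin (2 * a) + (1 - q) * Real.sin (2 * b))) ^ 2) / 2 := by
  simp_rw [qfa_integral μ q a b hq0 hq1 X hXmeas hXindep hXdist]
  rw [qfa_tsum α h0 h1]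
  · simp only [Complex.add_re, Complex.add_im, Complex.re_ofReal_mul, Complex.im_ofReal_mul,
      Complex.exp_ofReal_mul_I_re, Complex.exp_ofReal_mul_I_im]
  · refine (norm_add_le _ _).trans ?_
    rw [norm_mul, norm_mul, Complex.norm_exp_ofReal_mul_I, Complex.norm_exp_ofReal_mul_I,
      Complex.norm_real, Complex.norm_real, Real.norm_of_nonneg hq0,
      Real.norm_of_nonneg (by linarith)]
    linarith

/-- Bounds on the cosine and sine averages. -/
lemma qfa_bounds (p q h : ℝ) (hp0 : 0 ≤ p) (hp1 : p ≤ 1) (hq0 : 0 ≤ q) (hq1 : q ≤ 1)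
    (hh : 0 ≤ h) :
    q * Real.cos (2 * (h * (1 - p))) + (1 - q) * Real.cos (2 * (-(h * p))) ≤ 1 ∧
    1 - 2 * h ^ 2 ≤ q * Real.cos (2 * (h * (1 - p))) + (1 - q) * Real.cos (2 * (-(h * p))) ∧
    2 * h * (q - p) - 2 * h ^ 3 ≤
      q * Real.sin (2 * (h * (1 - p))) + (1 - q) * Real.sin (2 * (-(h * p))) ∧
    q * Real.sin (2 * (h * (1 - p))) + (1 - q) * Real.sin (2 * (-(h * p))) ≤
      2 * h * (q - p) + 2 * h ^ 3 := by
  have key : ∀ r : ℝ, 0 ≤ r → r ≤ 1 → 1 - 2 * h ^ 2 ≤ Real.cos (2 * (h * r)) ∧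
      2 * h * r - 2 * h ^ 3 ≤ Real.sin (2 * (h * r)) ∧ Real.sin (2 * (h * r)) ≤ 2 * h * r := by
    intro r hr0 hr1
    have hx : 0 ≤ h * r := mul_nonneg hh hr0
    have hx1 : h * r ≤ h := mul_le_of_le_one_right hh hr1
    have c := Real.one_sub_sq_div_two_le_cos (x := 2 * (h * r))
    have s := Real.sin_ge_sub_cube (x := 2 * (h * r)) (by positivity)
    have s' := Real.sin_le (x := 2 * (h * r)) (by positivity)
    have e2 : (h * r) ^ 2 ≤ h ^ 2 := by gcongr
    have e3 : (h * r) ^ 3 ≤ h ^ 3 := by gcongr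
    have e4 : 0 ≤ h ^ 3 := by positivity
    refine ⟨by linarith, by linarith, by linarith⟩
  obtain ⟨c1, s1, t1⟩ := key (1 - p) (by linarith) (by linarith)
  obtain ⟨c2, s2, t2⟩ := key p hp0 hp1
  have d1 := Real.cos_le_one (2 * (h * (1 - p)))
  have d2 := Real.cos_le_one (2 * (h * p))
  rw [mul_neg, Real.cos_neg, Real.sin_neg]
  have e4 : 0 ≤ h ^ 3 := by positivity
  have hq' : 0 ≤ 1 - q := by linarith
  have m1 := mul_le_mul_of_nonneg_left c1 hq0
  have m2 := mul_le_mul_of_nonneg_left c2 hq'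
  have m3 := mul_le_mul_of_nonneg_left d1 hq0
  have m4 := mul_le_mul_of_nonneg_left d2 hq'
  have m5 := mul_le_mul_of_nonneg_left s1 hq0
  have m6 := mul_le_mul_of_nonneg_left s2 hq'
  have m7 := mul_le_mul_of_nonneg_left t1 hq0
  have m8 := mul_le_mul_of_nonneg_left t2 hq'
  have m9 := mul_nonneg hq0 e4
  have m10 := mul_nonneg hq' e4
  refine ⟨by linarith, by linarith, by linarith, by linarith⟩



/-- Quantitative form of the theorem that a two-state quantum finite automaton
distinguishes a coin of bias `p` from one of bias `p + ε`: with `A = 10000`,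
`B = 7500`, and measurement probability `α = ε²/B`, the limiting acceptance
probabilities `a(q) = Σ_t α(1-α)^t E[sin² θ_t]` satisfy
`a(p+ε) - a(p) ≥ 0.01`. Here `X` (resp. `Y`) gives the i.i.d. rotation-angle
steps for the coin of bias `p` (resp. `p + ε`). -/
theorem two_state_qfa_distinguishes
    {Ω : Type*} [MeasurableSpace Ω] (μ : Measure Ω) [IsProbabilityMeasure μ]
    (p ε A B α : ℝ) (hp : p ∈ Set.Icc (0:ℝ) 1) (hε : 0 < ε) (hpε : p + ε ≤ 1)
    (hA : A = 10000) (hB : B = 7500) (hα : α = ε ^ 2 / B)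
    (X Y : ℕ → Ω → ℝ)
    (hXmeas : ∀ i, Measurable (X i)) (hYmeas : ∀ i, Measurable (Y i))
    (hXindep : iIndepFun X μ)
    (hYindep : iIndepFun Y μ)
    (hXdist : ∀ i, μ.map (X i) =
      ENNReal.ofReal p • Measure.dirac (ε * (1 - p) / A) +
      ENNReal.ofReal (1 - p) • Measure.dirac (-(ε * p) / A))
    (hYdist : ∀ i, μ.map (Y i) =
      ENNReal.ofReal (p + ε) • Measure.dirac (ε * (1 - p) / A) +
      ENNReal.ofReal (1 - (p + ε)) • Measure.dirac (-(ε * p) / A)) :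
    (∑' t : ℕ, α * (1 - α) ^ t *
        ∫ ω, Real.sin (∑ i ∈ Finset.range t, Y i ω) ^ 2 ∂μ) -
    (∑' t : ℕ, α * (1 - α) ^ t *
        ∫ ω, Real.sin (∑ i ∈ Finset.range t, X i ω) ^ 2 ∂μ) ≥ 0.01 := by
  obtain ⟨hp0, hp1⟩ := hp
  subst hA hB
  have hε1 : ε ≤ 1 := by linarith
  have hs0 : 0 < ε ^ 2 := by positivity
  have hs1 : ε ^ 2 ≤ 1 := by nlinarith
  have hα0 : 0 < α := by rw [hα]; positivity
  have hα1 : α ≤ 1 / 7500 := by rw [hα]; linarith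
  have hs : ε ^ 2 = 7500 * α := by rw [hα]; ring
  rw [qfa_value μ (p + ε) _ _ α (by linarith) hpε hα0 (by linarith) Y hYmeas hYindep hYdist,
    qfa_value μ p _ _ α hp0 hp1 hα0 (by linarith) X hXmeas hXindep hXdist]
  have ea : ε * (1 - p) / 10000 = (ε / 10000) * (1 - p) := by ring
  have eb : -(ε * p) / 10000 = -((ε / 10000) * p) := by ring
  rw [ea, eb]
  obtain ⟨y1, y2, y3, y4⟩ := qfa_bounds p (p + ε) (ε / 10000) hp0 hp1 (by linarith) hpε
    (by positivity)
  obtain ⟨x1, x2, x3, x4⟩ := qfa_bounds p p (ε / 10000) hp0 hp1 hp0 hp1 (by positivity)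
  generalize (p + ε) * Real.cos (2 * (ε / 10000 * (1 - p))) +
    (1 - (p + ε)) * Real.cos (2 * (-(ε / 10000 * p))) = cy at *
  generalize (p + ε) * Real.sin (2 * (ε / 10000 * (1 - p))) +
    (1 - (p + ε)) * Real.sin (2 * (-(ε / 10000 * p))) = sy at *
  generalize p * Real.cos (2 * (ε / 10000 * (1 - p))) +
    (1 - p) * Real.cos (2 * (-(ε / 10000 * p))) = cx at *
  generalize p * Real.sin (2 * (ε / 10000 * (1 - p))) +
    (1 - p) * Real.sin (2 * (-(ε / 10000 * p))) = sx at *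
  have h2 : 2 * (ε / 10000) ^ 2 = 15000 / 100000000 * α := by rw [div_pow, hs]; ring
  have h3 : 2 * (ε / 10000) ^ 3 ≤ α / 10000000 := by
    have : 2 * (ε / 10000) ^ 3 = 2 * (ε * ε ^ 2) / 10000 ^ 3 := by ring
    rw [this, hs]
    nlinarith
  have h4 : 2 * (ε / 10000) * (p + ε - p) = 3 / 2 * α := by
    have : 2 * (ε / 10000) * (p + ε - p) = 2 * ε ^ 2 / 10000 := by ring
    rw [this, hs]; ring
  rw [h2] at x2 y2
  rw [h4] at y3 y4
  rw [sub_self, mul_zero] at x3 x4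
  -- bounds on the real parts
  have rb : ∀ c : ℝ, c ≤ 1 → 1 - 15000 / 100000000 * α ≤ c →
      α ≤ 1 - (1 - α) * c ∧ 1 - (1 - α) * c ≤ 1001 / 1000 * α := by
    intro c hc hc'
    constructor <;> nlinarith
  obtain ⟨ry1, ry2⟩ := rb cy y1 y2
  obtain ⟨rx1, rx2⟩ := rb cx x1 x2
  have iy : 14 / 10 * α ≤ (1 - α) * sy := by nlinarith
  have ix : |(1 - α) * sx| ≤ α / 100 := by
    rw [abs_le]; constructor <;> nlinarith
  have ix2 : ((1 - α) * sx) ^ 2 ≤ (α / 100) ^ 2 := sq_le_sq' (abs_le.1 ix).1 (abs_le.1 ix).2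
  generalize 1 - (1 - α) * cy = Ry at *
  generalize 1 - (1 - α) * cx = Rx at *
  generalize (1 - α) * sy = Iy at *
  generalize (1 - α) * sx = Ix at *
  clear x1 x2 x3 x4 y1 y2 y3 y4 rb h2 h3 h4 hs hXdist hYdist
  have sq1 : α ^ 2 ≤ Rx ^ 2 := by gcongr
  have sq2 : Rx ^ 2 ≤ (1001 / 1000 * α) ^ 2 := by
    have : 0 ≤ Rx := by linarith
    gcongr
  have sq3 : α ^ 2 ≤ Ry ^ 2 := by gcongr
  have sq4 : Ry ^ 2 ≤ (1001 / 1000 * α) ^ 2 := by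
    have : 0 ≤ Ry := by linarith
    gcongr
  have sq5 : (14 / 10 * α) ^ 2 ≤ Iy ^ 2 := by gcongr
  have hα2 : 0 < α ^ 2 := by positivity
  have pr1 : α * Ry ≤ α * (1001 / 1000 * α) := by gcongr
  have pr2 : α * α ≤ α * Rx := by gcongr
  have fy : α * Ry / (Ry ^ 2 + Iy ^ 2) ≤ 1 / 2 := by
    rw [div_le_iff₀ (by linarith [sq_nonneg Iy])]
    linarith
  have fx : 9 / 10 ≤ α * Rx / (Rx ^ 2 + Ix ^ 2) := by
    rw [le_div_iff₀ (by linarith [sq_nonneg Ix])]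
    linarith
  have : (0.01 : ℝ) = 1 / 100 := by norm_num
  rw [this]
  linarith
end

section
/- Suppose the coin bias is q = p. Then for every α ∈ (0,1) and every positive integer u, the limiting acceptance probability satisfies Σ_{t=0}^∞ α(1−α)^t E[sin² θ_t] ≤ (1−α)^u + ε² u / A². -/
open MeasureTheory ProbabilityTheory

lemma aux_int {Ω : Type*} [MeasurableSpace Ω] (μ : Measure Ω) (p a b : ℝ) (hp : p ∈ Set.Icc (0:ℝ) 1)
    (Y : Ω → ℝ) (hY : Measurable Y)
    (hd : μ.map Y = ENNReal.ofReal p • Measure.dirac a + ENNReal.ofReal (1 - p) • Measure.dirac b)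
    (g : ℝ → ℝ) (hg : Measurable g) :
    Integrable (fun ω => g (Y ω)) μ ∧ ∫ ω, g (Y ω) ∂μ = p * g a + (1 - p) * g b := by
  have h1 : Integrable g (ENNReal.ofReal p • Measure.dirac a) :=
    (integrable_dirac (by simp)).smul_measure ENNReal.ofReal_ne_top
  have h2 : Integrable g (ENNReal.ofReal (1 - p) • Measure.dirac b) :=
    (integrable_dirac (by simp)).smul_measure ENNReal.ofReal_ne_top
  constructor
  · have : Integrable g (μ.map Y) := by rw [hd]; exact h1.add_measure h2
    exact this.comp_measurable hY
  · rw [← integral_map hY.aemeasurable hg.aestronglyMeasurable, hd, integral_add_measure h1 h2,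
      integral_smul_measure, integral_smul_measure, integral_dirac, integral_dirac,
      ENNReal.toReal_ofReal hp.1, ENNReal.toReal_ofReal (by linarith [hp.2])]
    simp

/-- Upper bound on the limiting acceptance probability of the two-state quantum
automaton when the coin bias equals `p`: for every measurement probability
`α ∈ (0,1)` and every positive integer `u`,
`Σ_t α(1-α)^t E[sin² θ_t] ≤ (1-α)^u + ε² u / A²`. -/
theorem acceptance_upper_bound_bias_p
    {Ω : Type*} [MeasurableSpace Ω] (μ : Measure Ω) [IsProbabilityMeasure μ]
    (p ε A : ℝ) (hp : p ∈ Set.Icc (0:ℝ) 1) (hε : 0 < ε) (hpε : p + ε ≤ 1)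
    (hA : 0 < A)
    (X : ℕ → Ω → ℝ) (hmeas : ∀ i, Measurable (X i))
    (hindep : iIndepFun X μ)
    (hdist : ∀ i, μ.map (X i) =
      ENNReal.ofReal p • Measure.dirac (ε * (1 - p) / A) +
      ENNReal.ofReal (1 - p) • Measure.dirac (-(ε * p) / A))
    (α : ℝ) (hα : α ∈ Set.Ioo (0:ℝ) 1) (u : ℕ) (hu : 1 ≤ u) :
    (∑' t : ℕ, α * (1 - α) ^ t *
        ∫ ω, Real.sin (∑ i ∈ Finset.range t, X i ω) ^ 2 ∂μ)
      ≤ (1 - α) ^ u + ε ^ 2 * u / A ^ 2 := by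
  obtain ⟨hα0, hα1⟩ := hα
  have hL : ∀ i, MemLp (X i) 2 μ := fun i =>
    (memLp_two_iff_integrable_sq (hmeas i).aestronglyMeasurable).2
      (aux_int μ p _ _ hp (X i) (hmeas i) (hdist i) (fun x => x ^ 2) (by fun_prop)).1
  have hE : ∀ i, ∫ ω, X i ω ∂μ = 0 := fun i => by
    rw [(aux_int μ p _ _ hp (X i) (hmeas i) (hdist i) (fun x => x) (by fun_prop)).2]
    ring
  have hV : ∀ i, variance (X i) μ ≤ ε ^ 2 / A ^ 2 := fun i => by
    rw [variance_of_integral_eq_zero (hmeas i).aemeasurable (hE i),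
      (aux_int μ p _ _ hp (X i) (hmeas i) (hdist i) (fun x => x ^ 2) (by fun_prop)).2]
    have : p * (ε * (1 - p) / A) ^ 2 + (1 - p) * (-(ε * p) / A) ^ 2
        = (p * (1 - p)) * (ε ^ 2 / A ^ 2) := by
      field_simp
      ring
    rw [this]
    have h3 : 0 ≤ ε ^ 2 / A ^ 2 := by positivity
    have h4 : p * (1 - p) ≤ 1 := by nlinarith [hp.1, hp.2]
    nlinarith
  have hLS : ∀ t : ℕ, MemLp (∑ i ∈ Finset.range t, X i) 2 μ := fun t =>
    memLp_finsetSum' _ (fun i _ => hL i)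
  have hS : ∀ t : ℕ, ∫ ω, (∑ i ∈ Finset.range t, X i ω) ^ 2 ∂μ ≤ t * (ε ^ 2 / A ^ 2) := fun t => by
    have h0 : ∫ ω, (∑ i ∈ Finset.range t, X i) ω ∂μ = 0 := by
      simp only [Finset.sum_apply]
      rw [integral_finsetSum _ (fun i _ => (hL i).integrable (by norm_num))]
      simp [hE]
    have h1 := IndepFun.variance_sum (s := Finset.range t) (fun i _ => hL i)
      (fun i _ j _ hij => hindep.indepFun hij)
    rw [variance_of_integral_eq_zero (hLS t).aestronglyMeasurable.aemeasurable h0] at h1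
    simp only [Finset.sum_apply] at h1
    rw [h1]
    calc _ ≤ ∑ i ∈ Finset.range t, ε ^ 2 / A ^ 2 := Finset.sum_le_sum (fun i _ => hV i)
      _ = _ := by simp
  set a : ℕ → ℝ := fun t => ∫ ω, Real.sin (∑ i ∈ Finset.range t, X i ω) ^ 2 ∂μ with ha
  have hmS : ∀ t : ℕ, Measurable (fun ω => ∑ i ∈ Finset.range t, X i ω) := fun t =>
    Finset.measurable_fun_sum _ (fun i _ => hmeas i)
  have hi : ∀ t : ℕ, Integrable (fun ω => Real.sin (∑ i ∈ Finset.range t, X i ω) ^ 2) μ := fun t =>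
    Integrable.of_bound (C := 1)
      ((Real.measurable_sin.comp (hmS t)).pow_const 2).aestronglyMeasurable
      (Filter.Eventually.of_forall fun ω => by
        rw [Real.norm_eq_abs, abs_of_nonneg (sq_nonneg _)]; exact Real.sin_sq_le_one _)
  have ha0 : ∀ t, 0 ≤ a t := fun t => integral_nonneg (fun ω => sq_nonneg _)
  have ha1 : ∀ t, a t ≤ 1 := fun t => by
    calc a t ≤ ∫ _, (1:ℝ) ∂μ :=
          integral_mono (hi t) (integrable_const _) (fun ω => Real.sin_sq_le_one _)
      _ = 1 := by simp
  have ha2 : ∀ t : ℕ, a t ≤ t * (ε ^ 2 / A ^ 2) := fun t => by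
    refine le_trans (integral_mono (hi t) ?_ (fun ω => ?_)) (hS t)
    · have := (hLS t).integrable_sq
      simpa only [Finset.sum_apply] using this
    · exact sq_le_sq.2 Real.abs_sin_le_abs
  have hr0 : 0 ≤ 1 - α := by linarith
  have hg : HasSum (fun t : ℕ => α * (1 - α) ^ t) 1 := by
    have := (hasSum_geometric_of_lt_one hr0 (by linarith : 1 - α < 1)).mul_left α
    simpa [hα0.ne'] using this
  have hw : ∀ t : ℕ, 0 ≤ α * (1 - α) ^ t := fun t => by positivity
  have hf : Summable (fun t : ℕ => α * (1 - α) ^ t * a t) :=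
    Summable.of_nonneg_of_le (fun t => mul_nonneg (hw t) (ha0 t))
      (fun t => mul_le_of_le_one_right (hw t) (ha1 t)) hg.summable
  rw [← hf.sum_add_tsum_nat_add u, add_comm]
  have hc : 0 ≤ ε ^ 2 * u / A ^ 2 := by positivity
  refine add_le_add ?_ ?_
  · have hg2 := hg.mul_left ((1 - α) ^ u)
    rw [mul_one] at hg2
    refine (((summable_nat_add_iff u).2 hf).tsum_le_tsum (fun t => ?_) hg2.summable).trans
      hg2.tsum_eq.le
    calc _ ≤ α * (1 - α) ^ (t + u) := mul_le_of_le_one_right (hw _) (ha1 _)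
      _ = _ := by ring
  · calc _ ≤ ∑ t ∈ Finset.range u, α * (1 - α) ^ t * (ε ^ 2 * u / A ^ 2) := by
          refine Finset.sum_le_sum (fun t ht => mul_le_mul_of_nonneg_left ?_ (hw t))
          refine (ha2 t).trans ?_
          have : (t:ℝ) ≤ u := by exact_mod_cast (Finset.mem_range.1 ht).le
          calc (t:ℝ) * (ε ^ 2 / A ^ 2) ≤ u * (ε ^ 2 / A ^ 2) := by gcongr
            _ = _ := by ring
      _ = (∑ t ∈ Finset.range u, α * (1 - α) ^ t) * (ε ^ 2 * u / A ^ 2) := by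
          rw [Finset.sum_mul]
      _ ≤ _ := mul_le_of_le_one_left hc (sum_le_hasSum _ (fun t _ => hw t) hg)
end

section
/- Suppose the coin bias is q = p + ε. Then for every positive integer t with t ≤ πA/(4ε²), one has Pr[|θ_t| > π/2] ≤ 4/(πA). -/
open MeasureTheory ProbabilityTheory Real

/-- Concentration of the angle walk when the coin bias is `q = p + ε`: for every
positive integer `t` with `t ≤ πA/(4ε²)`, the probability that `|θ_t| > π/2`
is at most `4/(πA)`. -/
theorem angle_walk_tail_bound_bias_p_plus_eps
    {Ω : Type*} [MeasurableSpace Ω] (μ : Measure Ω) [IsProbabilityMeasure μ]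
    (p ε A : ℝ) (hp : p ∈ Set.Icc (0:ℝ) 1) (hε : 0 < ε) (hpε : p + ε ≤ 1)
    (hA : 0 < A)
    (X : ℕ → Ω → ℝ) (hmeas : ∀ i, Measurable (X i))
    (hindep : iIndepFun X μ)
    (hdist : ∀ i, μ.map (X i) =
      ENNReal.ofReal (p + ε) • Measure.dirac (ε * (1 - p) / A) +
      ENNReal.ofReal (1 - (p + ε)) • Measure.dirac (-(ε * p) / A))
    (t : ℕ) (ht : 1 ≤ t) (htle : (t : ℝ) ≤ π * A / (4 * ε ^ 2)) :
    μ {ω | |∑ i ∈ Finset.range t, X i ω| > π / 2}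
      ≤ ENNReal.ofReal (4 / (π * A)) := by
  have hπ := Real.pi_pos
  have hae : ∀ i, ∀ᵐ ω ∂μ, X i ω ∈ Set.Icc (-(ε * p) / A) (ε * (1 - p) / A) := by
    intro i
    have hle : -(ε * p) / A ≤ ε * (1 - p) / A := by
      apply div_le_div_of_nonneg_right _ hA.le
      nlinarith
    have h : ∀ᵐ x ∂(μ.map (X i)), x ∈ Set.Icc (-(ε * p) / A) (ε * (1 - p) / A) := by
      rw [hdist i, ae_add_measure_iff]
      constructor
      · apply Measure.ae_smul_measure
        exact (ae_dirac_iff measurableSet_Icc).2 ⟨hle, le_rfl⟩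
      · apply Measure.ae_smul_measure
        exact (ae_dirac_iff measurableSet_Icc).2 ⟨le_rfl, hle⟩
    exact ae_of_ae_map (hmeas i).aemeasurable h
  have hL : ∀ i, MemLp (X i) 2 μ := fun i =>
    memLp_of_bounded (hae i) (hmeas i).aestronglyMeasurable 2
  have hvar : ∀ i, variance (X i) μ ≤ (ε / A / 2) ^ 2 := by
    intro i
    have h := variance_le_sq_of_bounded (hae i) (hmeas i).aemeasurable
    have e : (ε * (1 - p) / A - -(ε * p) / A) = ε / A := by ring
    rwa [e] at h
  have hmean : ∀ i, ∫ ω, X i ω ∂μ = ε ^ 2 / A := by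
    intro i
    have h := integral_map (μ := μ) (hmeas i).aemeasurable
      (f := fun x : ℝ => x) aestronglyMeasurable_id
    rw [← h, hdist i, integral_add_measure, integral_smul_measure, integral_smul_measure,
      integral_dirac, integral_dirac, ENNReal.toReal_ofReal (by linarith [hp.1]),
      ENNReal.toReal_ofReal (by linarith)]
    · simp only [smul_eq_mul]
      ring
    · exact (integrable_dirac (by simp)).smul_measure ENNReal.ofReal_ne_top
    · exact (integrable_dirac (by simp)).smul_measure ENNReal.ofReal_ne_top
  set S : Ω → ℝ := ∑ i ∈ Finset.range t, X i with hS
  have hSL : MemLp S 2 μ := memLp_finset_sum' _ fun i _ => hL i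
  have hSvar : variance S μ ≤ π / (16 * A) := by
    rw [hS, IndepFun.variance_sum (fun i _ => hL i)
      (fun i _ j _ hij => hindep.indepFun hij)]
    calc _ ≤ ∑ i ∈ Finset.range t, (ε / A / 2) ^ 2 := Finset.sum_le_sum fun i _ => hvar i
      _ = t * (ε / A / 2) ^ 2 := by simp
      _ ≤ π * A / (4 * ε ^ 2) * (ε / A / 2) ^ 2 := by gcongr
      _ = _ := by field_simp; norm_num
  have hSmean : ∫ ω, S ω ∂μ = t * (ε ^ 2 / A) := by
    simp only [hS, Finset.sum_apply]
    rw [integral_finset_sum _ fun i _ => (hL i).integrable (by norm_num)]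
    simp [hmean]
  have hm0 : 0 ≤ t * (ε ^ 2 / A) := by positivity
  have hm1 : t * (ε ^ 2 / A) ≤ π / 4 := by
    calc _ ≤ π * A / (4 * ε ^ 2) * (ε ^ 2 / A) := by gcongr
      _ = _ := by field_simp
  have hc := meas_ge_le_variance_div_sq hSL (c := π / 4) (by positivity)
  refine (measure_mono ?_).trans (hc.trans (ENNReal.ofReal_le_ofReal ?_))
  · intro ω hω
    simp only [Set.mem_setOf_eq, gt_iff_lt] at hω ⊢
    rw [hSmean]
    have e : ∑ i ∈ Finset.range t, X i ω = S ω := by simp [hS]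
    rw [e] at hω
    rcases lt_abs.1 hω with h | h
    · exact le_abs.2 (Or.inl (by linarith))
    · exact le_abs.2 (Or.inr (by linarith))
  · calc _ ≤ π / (16 * A) / (π / 4) ^ 2 := by gcongr
      _ = 1 / (π * A) := by field_simp; norm_num
      _ ≤ _ := by gcongr; norm_num
end

section
/- (Leaky Subspace Lemma.) Let A be an n×n complex matrix, let x ∈ ℂⁿ, and let U ⊆ ℂⁿ be a compact set. Suppose that for every y ∈ U there exists a positive integer k such that x† Aᵏ y ≠ 0. Then there exists a real constant c > 0 such that for every y ∈ U, max_{1 ≤ k ≤ n} |x† Aᵏ y| ≥ c. -/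
open Matrix

lemma leaky_aux {n : ℕ} (A : Matrix (Fin n) (Fin n) ℂ) (x y : Fin n → ℂ)
    (h : ∀ k : ℕ, 1 ≤ k → k ≤ n → star x ⬝ᵥ (A ^ k).mulVec y = 0) (k : ℕ) (hk : 0 < k) :
    star x ⬝ᵥ (A ^ k).mulVec y = 0 := by
  rcases Nat.eq_zero_or_pos n with rfl | hn
  · simp [dotProduct]
  obtain ⟨j, rfl⟩ : ∃ j, k = j + 1 := ⟨k - 1, by omega⟩
  have hd : ((Polynomial.X ^ j : Polynomial ℂ) %ₘ A.charpoly).natDegree < n := by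
    have := Polynomial.natDegree_modByMonic_lt (Polynomial.X ^ j : Polynomial ℂ)
      A.charpoly_monic (by
        intro h1
        have h2 := A.charpoly_natDegree_eq_dim
        rw [h1] at h2
        simp at h2
        omega)
    rwa [A.charpoly_natDegree_eq_dim, Fintype.card_fin] at this
  rw [pow_succ, A.pow_eq_aeval_mod_charpoly j, Polynomial.aeval_eq_sum_range' hd,
    Finset.sum_mul, Matrix.sum_mulVec, dotProduct_sum]
  apply Finset.sum_eq_zero
  intro i hi
  rw [smul_mul_assoc, ← pow_succ, smul_mulVec, dotProduct_smul,
    h (i + 1) (by omega) (by have := Finset.mem_range.1 hi; omega), smul_zero]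

/-- Leaky Subspace Lemma: if for every `y` in a compact set `U ⊆ ℂⁿ` there is a
positive power `k` with `x† Aᵏ y ≠ 0`, then there is a uniform constant `c > 0`
such that every `y ∈ U` has some `k ∈ {1, …, n}` with `|x† Aᵏ y| ≥ c`. -/
theorem leaky_subspace_lemma {n : ℕ} (A : Matrix (Fin n) (Fin n) ℂ)
    (x : Fin n → ℂ) (U : Set (Fin n → ℂ)) (hU : IsCompact U)
    (h : ∀ y ∈ U, ∃ k : ℕ, 0 < k ∧ star x ⬝ᵥ (A ^ k).mulVec y ≠ 0) :
    ∃ c : ℝ, 0 < c ∧ ∀ y ∈ U, ∃ k : ℕ, 1 ≤ k ∧ k ≤ n ∧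
      c ≤ ‖star x ⬝ᵥ (A ^ k).mulVec y‖ := by
  rcases U.eq_empty_or_nonempty with rfl | hne
  · exact ⟨1, one_pos, by simp⟩
  have hc : Continuous fun y : Fin n → ℂ =>
      ∑ k ∈ Finset.Icc 1 n, ‖star x ⬝ᵥ (A ^ k).mulVec y‖ := by
    refine continuous_finsetSum _ fun k _ => ?_
    exact (continuous_const.dotProduct (continuous_const.matrix_mulVec continuous_id)).norm
  obtain ⟨z, hz, hmin⟩ := hU.exists_isMinOn hne hc.continuousOn
  set m := ∑ k ∈ Finset.Icc 1 n, ‖star x ⬝ᵥ (A ^ k).mulVec z‖ with hm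
  have hpos : 0 < m := by
    have h0 : 0 ≤ m := Finset.sum_nonneg fun _ _ => norm_nonneg _
    refine lt_of_le_of_ne h0 fun he => ?_
    obtain ⟨k, hk, hne⟩ := h z hz
    refine hne (leaky_aux A x z (fun i h1 h2 => ?_) k hk)
    have := (Finset.sum_eq_zero_iff_of_nonneg (fun _ _ => norm_nonneg _)).1 he.symm i
      (Finset.mem_Icc.2 ⟨h1, h2⟩)
    exact norm_eq_zero.1 this
  have hn1 : (0 : ℝ) < n + 1 := by positivity
  have hcpos : 0 < m / (n + 1) := div_pos hpos hn1
  refine ⟨m / (n + 1), hcpos, fun y hy => ?_⟩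
  by_contra hcon
  push Not at hcon
  have h1 : m ≤ ∑ k ∈ Finset.Icc 1 n, ‖star x ⬝ᵥ (A ^ k).mulVec y‖ := hmin hy
  have h2 : ∑ k ∈ Finset.Icc 1 n, ‖star x ⬝ᵥ (A ^ k).mulVec y‖
      ≤ ∑ k ∈ Finset.Icc 1 n, m / (n + 1) :=
    Finset.sum_le_sum fun k hk =>
      (hcon k (Finset.mem_Icc.1 hk).1 (Finset.mem_Icc.1 hk).2).le
  simp only [Finset.sum_const, Nat.card_Icc, nsmul_eq_mul, Nat.add_sub_cancel] at h2
  have h3 : ((n : ℝ) + 1) * (m / (n + 1)) = m := by field_simp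
  linarith
end

section
/- (Root separation bound.) There is an absolute constant C > 0 with the following property. Let P be a univariate polynomial with integer coefficients, of degree d ≥ 2, all of whose coefficients have absolute value at most 2^τ, where τ ≥ 1. If z and z′ are distinct complex roots of P, then |z − z′| ≥ 2^{−C(d·log d + τ·d)}. -/
open Polynomial

lemma rsb_map_hasse {S : Type*} [CommRing S] (φ : ℤ →+* S) (P : ℤ[X]) (k : ℕ) :
    (hasseDeriv k P).map φ = hasseDeriv k (P.map φ) := by
  ext n
  simp [hasseDeriv_coeff]

lemma rsb_alg (P : ℤ[X]) (hP : P ≠ 0) (z : ℂ) (hz : aeval z P = 0) :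
    ∃ (f T : ℤ[X]) (k : ℕ), P = f * T ∧ aeval z f = 0 ∧ k * f.natDegree ≤ P.natDegree ∧
      (∀ j < k, aeval z (hasseDeriv j P) = 0) ∧
      (∀ α : ℂ, aeval α f = 0 → aeval α (hasseDeriv k P) ≠ 0) := by
  classical
  obtain ⟨f, hfirr, hfP, hfz⟩ : ∃ f : ℤ[X], Irreducible f ∧ f ∣ P ∧ aeval z f = 0 := by
    obtain ⟨s, hs, u, hu⟩ := UniqueFactorizationMonoid.exists_prime_factors P hP
    have h0 : aeval z s.prod = 0 := by
      have := hz
      rw [← hu, map_mul] at this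
      rcases mul_eq_zero.1 this with h | h
      · exact h
      · exact absurd h ((u.isUnit.map (aeval (R := ℤ) z)).ne_zero)
    rw [map_multiset_prod, Multiset.prod_eq_zero_iff, Multiset.mem_map] at h0
    obtain ⟨f, hf, hf0⟩ := h0
    exact ⟨f, (hs f hf).irreducible, (Multiset.dvd_prod hf).trans (Dvd.intro _ hu), hf0⟩
  have hdeg : f.natDegree ≠ 0 := by
    intro h
    rw [eq_C_of_natDegree_eq_zero h] at hfz
    have : f.coeff 0 = 0 := by simpa using hfz
    rw [eq_C_of_natDegree_eq_zero h, this] at hfirr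
    simp at hfirr
  have hF := (IsPrimitive.Int.irreducible_iff_irreducible_map_cast
    (hfirr.isPrimitive hdeg)).1 hfirr
  set F := f.map (Int.castRingHom ℚ) with hFdef
  set Q := P.map (Int.castRingHom ℚ) with hQdef
  have ev : ∀ (p : ℤ[X]) (α : ℂ), aeval α (p.map (Int.castRingHom ℚ)) = aeval α p := by
    intro p α
    exact aeval_map_algebraMap ℚ α p
  have hQ0 : Q ≠ 0 := (Polynomial.map_ne_zero_iff (RingHom.injective_int _)).2 hP
  have cop : ∀ (S : ℚ[X]), ¬ F ∣ S → ∀ α : ℂ, aeval α f = 0 → aeval α S ≠ 0 := by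
    intro S hS α hα h
    obtain ⟨a, b, hab⟩ := (hF.coprime_iff_not_dvd (n := S)).2 hS
    have := congrArg (aeval α) hab
    simp [h, hFdef, ev, hα] at this
  obtain ⟨S, hQS, hS⟩ := (FiniteMultiplicity.of_not_isUnit hF.not_isUnit hQ0).exists_eq_pow_mul_and_not_dvd
  set k := multiplicity F Q with hk
  obtain ⟨T, hT⟩ := hfP
  -- Taylor expansion
  have hFz' : aeval z (derivative F) ≠ 0 := by
    apply cop _ _ z hfz
    intro hd
    obtain ⟨a, b, hab⟩ := hF.separable
    exact hF.not_isUnit (isUnit_of_dvd_one (hab ▸ dvd_add (Dvd.intro_left _ rfl) (hd.mul_left _)))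
  let φ := algebraMap ℚ ℂ
  have tayF : ∃ U : ℂ[X], taylor z (F.map φ) = X * U := by
    apply X_dvd_iff.2
    rw [taylor_coeff_zero, eval_map_algebraMap, ev, hfz]
  obtain ⟨U, hU⟩ := tayF
  have hU0 : U.coeff 0 ≠ 0 := by
    have := taylor_coeff_one z (F.map φ)
    rw [hU, coeff_X_mul, derivative_map, eval_map_algebraMap] at this
    rwa [this]
  have tayQ : taylor z (Q.map φ) = X ^ k * (U ^ k * taylor z (S.map φ)) := by
    rw [hQS, Polynomial.map_mul, Polynomial.map_pow, taylor_mul, taylor_pow, hU, mul_pow, mul_assoc]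
  have hco : ∀ j, aeval z (hasseDeriv j P) = (taylor z (Q.map φ)).coeff j := by
    intro j
    rw [taylor_coeff, hQdef, Polynomial.map_map, ← rsb_map_hasse]
    rw [show φ.comp (Int.castRingHom ℚ) = algebraMap ℤ ℂ from RingHom.ext_int _ _]
    rw [eval_map_algebraMap]
  have hGz : aeval z (hasseDeriv k P) ≠ 0 := by
    rw [hco, tayQ, coeff_X_pow_mul', if_pos le_rfl, Nat.sub_self, mul_coeff_zero,
      coeff_zero_eq_eval_zero (U ^ k), eval_pow, ← coeff_zero_eq_eval_zero, taylor_coeff_zero, eval_map_algebraMap]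
    exact mul_ne_zero (pow_ne_zero _ hU0) (cop S hS z hfz)
  refine ⟨f, T, k, hT, hfz, ?_, ?_, ?_⟩
  · have h1 : Q.natDegree = P.natDegree := natDegree_map_eq_of_injective (RingHom.injective_int _) _
    have h2 : F.natDegree = f.natDegree := natDegree_map_eq_of_injective (RingHom.injective_int _) _
    have hS0 : S ≠ 0 := by rintro rfl; simp at hS
    rw [← h1, ← h2, hQS, natDegree_mul (pow_ne_zero _ hF.ne_zero) hS0, natDegree_pow]
    exact Nat.le_add_right _ _
  · intro j hj
    rw [hco, tayQ, coeff_X_pow_mul', if_neg (by omega)]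
  · intro α hα
    rw [← ev]
    apply cop _ _ α hα
    rintro ⟨W, hW⟩
    apply hGz
    rw [← ev, hW, map_mul, ev, hfz, zero_mul]

lemma rsb_bound (P : ℤ[X]) (d : ℕ) (hd : P.natDegree = d) (B : ℝ) (hB : 0 ≤ B)
    (hc : ∀ i, (|P.coeff i| : ℝ) ≤ B) (α : ℂ) (j : ℕ) :
    ‖aeval α (hasseDeriv j P)‖ ≤ (d + 1) * (d.choose j) * B * (max 1 ‖α‖) ^ d := by
  have hdeg : (hasseDeriv j P).natDegree < d + 1 :=
    Nat.lt_succ_of_le ((natDegree_hasseDeriv_le P j).trans (by omega))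
  rw [aeval_eq_sum_range' hdeg]
  have key : ∀ i ∈ Finset.range (d + 1), ‖(hasseDeriv j P).coeff i • α ^ i‖ ≤
      (d.choose j) * B * (max 1 ‖α‖) ^ d := by
    intro i hi
    have hi' : i ≤ d := by simpa [Nat.lt_succ_iff] using hi
    rw [zsmul_eq_mul, norm_mul, norm_pow, hasseDeriv_coeff]
    have h1 : ‖α‖ ^ i ≤ (max 1 ‖α‖) ^ d :=
      (pow_le_pow_left₀ (norm_nonneg _) (le_max_right _ _) i).trans
        (pow_le_pow_right₀ (le_max_left _ _) hi')
    have h2 : ‖(((((i + j).choose j : ℕ) : ℤ) * P.coeff (i + j) : ℤ) : ℂ)‖ ≤ (d.choose j) * B := by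
      by_cases h : i + j ≤ d
      · push_cast
        rw [norm_mul]
        have e1 : ‖(((i + j).choose j : ℕ) : ℂ)‖ = (((i + j).choose j : ℕ) : ℝ) := by simp
        have e2 : ‖((P.coeff (i + j) : ℤ) : ℂ)‖ ≤ B := by simpa using hc (i + j)
        rw [e1]
        gcongr
      · rw [coeff_eq_zero_of_natDegree_lt (by omega)]
        simp; positivity
    gcongr
  calc _ ≤ ∑ i ∈ Finset.range (d + 1), ‖(hasseDeriv j P).coeff i • α ^ i‖ := norm_sum_le _ _
    _ ≤ ∑ i ∈ Finset.range (d + 1), (d.choose j) * B * (max 1 ‖α‖) ^ d := Finset.sum_le_sum key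
    _ = _ := by simp; ring

lemma rsb_small (c : ℕ → ℂ) (d k : ℕ) (δ : ℂ) (hδ : δ ≠ 0) (hδ1 : ‖δ‖ ≤ 1)
    (h0 : ∀ j < k, c j = 0) (hk : k ≤ d) (hs : ∑ j ∈ Finset.range (d + 1), c j * δ ^ j = 0) :
    ‖c k‖ ≤ ‖δ‖ * ∑ j ∈ Finset.range (d + 1), ‖c j‖ := by
  classical
  have hkm : k ∈ Finset.range (d + 1) := by simp; omega
  rw [← Finset.add_sum_erase _ _ hkm] at hs
  have h1 : ‖c k * δ ^ k‖ ≤ ∑ j ∈ (Finset.range (d + 1)).erase k, ‖c j‖ * ‖δ‖ ^ (k + 1) := by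
    rw [eq_neg_of_add_eq_zero_left hs, norm_neg]
    refine (norm_sum_le _ _).trans (Finset.sum_le_sum fun j hj => ?_)
    rw [norm_mul, norm_pow]
    rcases lt_trichotomy j k with h | h | h
    · simp [h0 j h]
    · simp [h] at hj
    · gcongr ?_ * ?_
      exact pow_le_pow_of_le_one (norm_nonneg _) hδ1 h
  have h2 : ∑ j ∈ (Finset.range (d + 1)).erase k, ‖c j‖ ≤ ∑ j ∈ Finset.range (d + 1), ‖c j‖ :=
    Finset.sum_le_sum_of_subset_of_nonneg (Finset.erase_subset _ _) (fun _ _ _ => norm_nonneg _)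
  rw [← Finset.sum_mul, norm_mul, norm_pow] at h1
  have hp : 0 < ‖δ‖ ^ k := by positivity
  refine le_of_mul_le_mul_right (h1.trans ?_) hp
  calc _ ≤ (∑ j ∈ Finset.range (d + 1), ‖c j‖) * ‖δ‖ ^ (k + 1) := by gcongr
    _ = _ := by ring

lemma rsb_choose (d k : ℕ) : (d.choose k : ℝ) ≤ (d : ℝ) ^ k := by
  refine (Nat.choose_le_pow_div k d).trans (div_le_self (by positivity) ?_)
  exact_mod_cast Nat.one_le_iff_ne_zero.2 (Nat.factorial_ne_zero k)

lemma rsb_sum_eq (P : ℤ[X]) (d : ℕ) (hd : P.natDegree = d) (z w : ℂ) :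
    aeval w P = ∑ j ∈ Finset.range (d + 1), aeval z (hasseDeriv j P) * (w - z) ^ j := by
  rw [← eval_map_algebraMap, ← taylor_eval_sub z, eval_eq_sum_range' (n := d + 1)]
  · refine Finset.sum_congr rfl fun j _ => ?_
    rw [taylor_coeff, ← rsb_map_hasse, eval_map_algebraMap]
  · rw [natDegree_taylor]
    exact Nat.lt_succ_of_le (natDegree_map_le.trans hd.le)

lemma rsb_mahler (P f T : ℤ[X]) (hP : P ≠ 0) (d : ℕ) (hd : P.natDegree = d) (B : ℝ) (hB : 0 ≤ B)
    (hc : ∀ i, (|P.coeff i| : ℝ) ≤ B) (hT : P = f * T) :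
    (f.map (algebraMap ℤ ℂ)).mahlerMeasure ≤ (d + 1) * B := by
  have hT0 : T ≠ 0 := by rintro rfl; simp at hT; exact hP hT
  have h1 : 1 ≤ (T.map (algebraMap ℤ ℂ)).mahlerMeasure := by
    apply one_le_mahlerMeasure_of_one_le_norm_leadingCoeff
    rw [leadingCoeff_map_of_injective (RingHom.injective_int _)]
    have : (1 : ℝ) ≤ |(T.leadingCoeff : ℝ)| := by
      exact_mod_cast Int.one_le_abs (leadingCoeff_ne_zero.2 hT0)
    simpa using this
  have h2 := mahlerMeasure_mul (f.map (algebraMap ℤ ℂ)) (T.map (algebraMap ℤ ℂ))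
  rw [← Polynomial.map_mul, ← hT] at h2
  have h3 := mahlerMeasure_le_sum_norm_coeff (P.map (algebraMap ℤ ℂ))
  have h4 : ((P.map (algebraMap ℤ ℂ)).sum fun _ a ↦ ‖a‖) ≤ (d + 1) * B := by
    rw [sum_over_range' _ (by simp) (d + 1) (Nat.lt_succ_of_le (natDegree_map_le.trans hd.le))]
    calc _ ≤ ∑ i ∈ Finset.range (d + 1), B := by
          refine Finset.sum_le_sum fun i _ => ?_
          simpa using hc i
      _ = _ := by simp
  calc _ ≤ (f.map (algebraMap ℤ ℂ)).mahlerMeasure * (T.map (algebraMap ℤ ℂ)).mahlerMeasure :=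
        le_mul_of_one_le_right (mahlerMeasure_nonneg _) h1
    _ ≤ _ := by rw [← h2]; exact h3.trans h4

lemma rsb_main (P : ℤ[X]) (d : ℕ) (hd : P.natDegree = d) (hd2 : 2 ≤ d) (B : ℝ) (hB : 1 ≤ B)
    (hc : ∀ i, (|P.coeff i| : ℝ) ≤ B) (z w : ℂ) (hz : aeval z P = 0) (hw : aeval w P = 0)
    (hzw : z ≠ w) (h1 : ‖z - w‖ ≤ 1) :
    1 ≤ (((d + 1) * B) ^ (2 * d) * d ^ d * 2 ^ d) * ‖z - w‖ := by
  classical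
  have hP : P ≠ 0 := by rintro rfl; simp at hd; omega
  obtain ⟨f, T, k, hT, hfz, hk, hlow, hne⟩ := rsb_alg P hP z hz
  have hf0 : f ≠ 0 := by rintro rfl; simp at hT; exact hP hT
  have hB0 : 0 ≤ B := by linarith
  have hM := rsb_mahler P f T hP d hd B hB0 hc hT
  set fC := f.map (algebraMap ℤ ℂ) with hfC
  have hinj : Function.Injective (algebraMap ℤ ℂ) := RingHom.injective_int _
  have hfC0 : fC ≠ 0 := (Polynomial.map_ne_zero_iff hinj).2 hf0
  have hnd : fC.natDegree = f.natDegree := natDegree_map_eq_of_injective hinj _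
  set G := hasseDeriv k P with hG
  have hGd : G.natDegree ≤ d := (natDegree_hasseDeriv_le P k).trans (by omega)
  have hres := resultant_eq_prod_eval fC (G.map (algebraMap ℤ ℂ)) d (natDegree_map_le.trans hGd)
    (IsAlgClosed.splits _)
  rw [hnd, resultant_map_map] at hres
  have hrne : resultant f G f.natDegree d ≠ 0 := by
    intro h
    rw [h, map_zero, eq_comm, mul_eq_zero] at hres
    rcases hres with h | h
    · exact pow_ne_zero _ (leadingCoeff_ne_zero.2 hfC0) h
    · rw [Multiset.prod_eq_zero_iff, Multiset.mem_map] at h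
      obtain ⟨α, hα, h⟩ := h
      have := (mem_roots hfC0).1 hα
      rw [IsRoot, eval_map_algebraMap] at this
      rw [eval_map_algebraMap] at h
      exact hne α this h
  have hone : (1 : ℝ) ≤ ‖fC.leadingCoeff ^ d * (fC.roots.map (G.map (algebraMap ℤ ℂ)).eval).prod‖ := by
    rw [← hres]
    have : (1 : ℝ) ≤ |((resultant f G f.natDegree d : ℤ) : ℝ)| := by
      exact_mod_cast Int.one_le_abs hrne
    simpa using this
  have hzr : z ∈ fC.roots := by
    rw [mem_roots hfC0, IsRoot, eval_map_algebraMap]; exact hfz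
  obtain ⟨R, hR⟩ := Multiset.exists_cons_of_mem hzr
  have hcard : R.card + 1 = f.natDegree := by
    rw [← hnd, ← (IsAlgClosed.splits fC).natDegree_eq_card_roots.symm, hR, Multiset.card_cons]
  have hkd : k ≤ d := by nlinarith
  have hnle : f.natDegree ≤ d := by
    have hT0 : T ≠ 0 := by rintro rfl; simp at hT; exact hP hT
    rw [← hd, hT, natDegree_mul hf0 hT0]; omega
  have hd1 : (1 : ℝ) ≤ d := by exact_mod_cast (by omega : 1 ≤ d)
  -- bound at z
  have hbz : ‖aeval z G‖ ≤ ‖z - w‖ * ((d + 1) * B * 2 ^ d * (max 1 ‖z‖) ^ d) := by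
    have hs := rsb_sum_eq P d hd z w
    rw [hw] at hs
    have := rsb_small (fun j => aeval z (hasseDeriv j P)) d k (w - z)
      (sub_ne_zero.2 hzw.symm) (by rw [norm_sub_rev]; exact h1) hlow hkd hs.symm
    rw [norm_sub_rev w z] at this
    refine this.trans ?_
    gcongr
    calc _ ≤ ∑ j ∈ Finset.range (d + 1), (d + 1) * (d.choose j) * B * (max 1 ‖z‖) ^ d :=
          Finset.sum_le_sum fun j _ => rsb_bound P d hd B hB0 hc z j
      _ = (d + 1) * (∑ j ∈ Finset.range (d + 1), (d.choose j : ℝ)) * B * (max 1 ‖z‖) ^ d := by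
          rw [Finset.mul_sum, Finset.sum_mul, Finset.sum_mul]
      _ = _ := by
          have : ∑ j ∈ Finset.range (d + 1), (d.choose j : ℝ) = 2 ^ d := by
            exact_mod_cast Nat.sum_range_choose d
          rw [this]; ring
  have hbR : ∀ R : Multiset ℂ, ‖(R.map (G.map (algebraMap ℤ ℂ)).eval).prod‖ ≤
      ((d + 1) * d ^ k * B) ^ R.card * (R.map (fun a => max 1 ‖a‖)).prod ^ d := by
    intro R
    induction R using Multiset.induction_on with
    | empty => simp
    | cons a s ih =>
      rw [Multiset.map_cons, Multiset.prod_cons, norm_mul, Multiset.map_cons, Multiset.prod_cons,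
        Multiset.card_cons, eval_map_algebraMap]
      have hb : ‖aeval a G‖ ≤ (d + 1) * d ^ k * B * (max 1 ‖a‖) ^ d :=
        (rsb_bound P d hd B hB0 hc a k).trans (by gcongr; exact rsb_choose d k)
      calc _ ≤ ((d + 1) * d ^ k * B * (max 1 ‖a‖) ^ d) *
            (((d + 1) * d ^ k * B) ^ s.card * (s.map (fun a => max 1 ‖a‖)).prod ^ d) := by gcongr
        _ = _ := by ring
  have hMe := mahlerMeasure_eq_leadingCoeff_mul_prod_roots fC
  rw [hR, Multiset.map_cons, Multiset.prod_cons] at hMe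
  rw [hR, Multiset.map_cons, Multiset.prod_cons, eval_map_algebraMap, norm_mul, norm_mul,
    norm_pow] at hone
  have hk2 : k * R.card ≤ d := by nlinarith
  calc (1 : ℝ) ≤ _ := hone
    _ ≤ ‖fC.leadingCoeff‖ ^ d * ((‖z - w‖ * ((d + 1) * B * 2 ^ d * (max 1 ‖z‖) ^ d)) *
        (((d + 1) * d ^ k * B) ^ R.card * (R.map (fun a => max 1 ‖a‖)).prod ^ d)) := by
        gcongr
        exact hbR R
    _ = fC.mahlerMeasure ^ d * (((d + 1) * B) ^ (R.card + 1) * d ^ (k * R.card) * 2 ^ d) * ‖z - w‖ := by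
        rw [hMe, pow_mul (d : ℝ) k]
        simp only [mul_pow, pow_succ]; ring
    _ ≤ ((d + 1) * B) ^ d * (((d + 1) * B) ^ d * d ^ d * 2 ^ d) * ‖z - w‖ := by
        have : (1 : ℝ) ≤ (d + 1) * B := by nlinarith
        have h5 : 0 ≤ fC.mahlerMeasure := mahlerMeasure_nonneg _
        gcongr
        omega
    _ = _ := by ring


/-- Root separation bound: there is an absolute constant `C > 0` such that any
two distinct complex roots of a degree-`d ≥ 2` integer polynomial whose
coefficients are bounded in absolute value by `2^τ` (with `τ ≥ 1`) are at
distance at least `2^{-C(d log d + τ d)}`. -/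
theorem root_separation_bound :
    ∃ C : ℝ, 0 < C ∧ ∀ (P : Polynomial ℤ) (d : ℕ) (τ : ℝ),
      P.natDegree = d → 2 ≤ d → 1 ≤ τ →
      (∀ i : ℕ, (|P.coeff i| : ℝ) ≤ (2 : ℝ) ^ τ) →
      ∀ z z' : ℂ, Polynomial.aeval z P = 0 → Polynomial.aeval z' P = 0 →
        z ≠ z' →
        (2 : ℝ) ^ (-(C * ((d : ℝ) * Real.log d + τ * d))) ≤ ‖z - z'‖ := by
  refine ⟨12, by norm_num, ?_⟩
  intro P d τ hd hd2 hτ hc z w hz hw hzw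
  have hd2' : (2 : ℝ) ≤ d := by exact_mod_cast hd2
  have hlog : 0 ≤ Real.log d := Real.log_nonneg (by linarith)
  have hexp : 0 ≤ (12 : ℝ) * ((d : ℝ) * Real.log d + τ * d) := by positivity
  rcases le_total ‖z - w‖ 1 with h1 | h1
  swap
  · exact (Real.rpow_le_one_of_one_le_of_nonpos (by norm_num) (by linarith)).trans h1
  have hB1 : (1 : ℝ) ≤ (2 : ℝ) ^ τ := Real.one_le_rpow (by norm_num) (by linarith)
  have hmain := rsb_main P d hd hd2 _ hB1 hc z w hz hw hzw h1
  have hδ : 0 ≤ ‖z - w‖ := norm_nonneg _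
  rw [Real.rpow_neg (by norm_num), inv_le_iff_one_le_mul₀ (by positivity)]
  have hd0 : (0 : ℝ) < d := by linarith
  have e1 : ((d : ℝ)) ^ (6 * d) ≤ (2 : ℝ) ^ (12 * ((d : ℝ) * Real.log d)) := by
    rw [← Real.rpow_natCast, Real.rpow_def_of_pos hd0, Real.rpow_def_of_pos (by norm_num)]
    apply Real.exp_le_exp.2
    push_cast
    have : 0 ≤ (d : ℝ) * Real.log d := by positivity
    nlinarith [Real.log_two_gt_d9]
  have e2 : ((2 : ℝ) ^ τ) ^ (2 * d) ≤ (2 : ℝ) ^ (12 * (τ * d)) := by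
    rw [← Real.rpow_natCast, ← Real.rpow_mul (by norm_num)]
    apply Real.rpow_le_rpow_of_exponent_le (by norm_num)
    push_cast
    have : 0 ≤ τ * (d : ℝ) := by positivity
    nlinarith
  have e3 : ((d : ℝ) + 1) ≤ d ^ 2 := by nlinarith
  refine hmain.trans ?_
  rw [mul_comm ‖z - w‖]
  gcongr
  calc (((d : ℝ) + 1) * 2 ^ τ) ^ (2 * d) * (d : ℝ) ^ d * 2 ^ d
      ≤ ((d : ℝ) ^ 2 * 2 ^ τ) ^ (2 * d) * (d : ℝ) ^ d * (d : ℝ) ^ d := by gcongr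
    _ = (d : ℝ) ^ (6 * d) * ((2 : ℝ) ^ τ) ^ (2 * d) := by ring
    _ ≤ (2 : ℝ) ^ (12 * ((d : ℝ) * Real.log d)) * (2 : ℝ) ^ (12 * (τ * d)) := by gcongr
    _ = _ := by rw [← Real.rpow_add (by norm_num)]; ring_nf
end

section
/- There is an absolute constant C > 0 with the following property. Let P₁ and P₂ be nonzero univariate polynomials with integer coefficients, each of degree at most d (with d ≥ 2), all of whose coefficients have absolute value at most 2^τ, where τ ≥ 1. If z₁ is a complex root of P₁, z₂ is a complex root of P₂, and z₁ ≠ z₂, then |z₁ − z₂| ≥ 2^{−C(d·log d + τ·d)}. -/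
open Polynomial in
lemma rsb_pow_sub (x y : ℂ) (k n : ℕ) (hk : k ≤ n) :
    ‖x ^ k - y ^ k‖ ≤ ‖x - y‖ * n * (max 1 ‖x‖ ^ n * max 1 ‖y‖ ^ n) := by
  rw [← geom_sum₂_mul, norm_mul, mul_comm, mul_assoc]
  refine mul_le_mul_of_nonneg_left ?_ (norm_nonneg _)
  have hb : ∀ i ∈ Finset.range k, ‖x ^ i * y ^ (k - 1 - i)‖ ≤ max 1 ‖x‖ ^ n * max 1 ‖y‖ ^ n := by
    intro i hi
    have hi' := Finset.mem_range.1 hi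
    rw [norm_mul, norm_pow, norm_pow]
    have h1 : ‖x‖ ^ i ≤ max 1 ‖x‖ ^ n :=
      (pow_le_pow_left₀ (norm_nonneg _) (le_max_right 1 _) _).trans
        (pow_le_pow_right₀ (le_max_left _ _) (by omega))
    have h2 : ‖y‖ ^ (k - 1 - i) ≤ max 1 ‖y‖ ^ n :=
      (pow_le_pow_left₀ (norm_nonneg _) (le_max_right 1 _) _).trans
        (pow_le_pow_right₀ (le_max_left _ _) (by omega))
    gcongr
  refine (norm_sum_le_of_le _ hb).trans ?_
  rw [Finset.sum_const, Finset.card_range, nsmul_eq_mul]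
  gcongr

lemma rsb_det_le {n : ℕ} (A : Matrix (Fin n) (Fin n) ℂ) (c : Fin n → ℝ)
    (h : ∀ i j, ‖A i j‖ ≤ c i) : ‖A.det‖ ≤ n.factorial * ∏ i, c i := by
  rw [Matrix.det_apply]
  have hb : ∀ σ ∈ (Finset.univ : Finset (Equiv.Perm (Fin n))),
      ‖Equiv.Perm.sign σ • ∏ i, A (σ i) i‖ ≤ ∏ i, c i := by
    intro σ _
    have h1 : ‖Equiv.Perm.sign σ • ∏ i, A (σ i) i‖ = ∏ i, ‖A (σ i) i‖ := by
      rcases Int.units_eq_one_or (Equiv.Perm.sign σ) with h | h <;> simp [h]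
    rw [h1, ← Equiv.prod_comp σ c]
    exact Finset.prod_le_prod (fun _ _ => norm_nonneg _) (fun i _ => h _ _)
  refine (norm_sum_le_of_le _ hb).trans ?_
  simp [Fintype.card_perm]

lemma rsb_vand {n : ℕ} (α : Fin n → ℂ) (i₁ i₂ : Fin n) (hne : i₁ ≠ i₂) :
    ‖(Matrix.vandermonde α).det‖ ≤ n.factorial *
      ((∏ i, max 1 ‖α i‖) ^ n * (‖α i₁ - α i₂‖ * n * max 1 ‖α i₂‖ ^ n)) := by
  rw [← Matrix.det_updateRow_add_smul_self (Matrix.vandermonde α) hne (-1)]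
  refine (rsb_det_le _ (fun i => max 1 ‖α i‖ ^ n *
    (if i = i₁ then ‖α i₁ - α i₂‖ * n * max 1 ‖α i₂‖ ^ n else 1)) ?_).trans ?_
  · intro i j
    by_cases hi : i = i₁
    · subst hi
      have := rsb_pow_sub (α i) (α i₂) j n j.2.le
      simp only [Matrix.updateRow_self, if_true]
      simp only [Pi.add_apply, Pi.smul_apply, Matrix.vandermonde_apply, smul_eq_mul, neg_one_mul,
        ← sub_eq_add_neg]
      refine this.trans (le_of_eq (by ring))
    · simp only [Matrix.updateRow_ne hi, if_neg hi, mul_one, Matrix.vandermonde_apply, norm_pow]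
      exact (pow_le_pow_left₀ (norm_nonneg _) (le_max_right 1 _) _).trans
        (pow_le_pow_right₀ (le_max_left _ _) j.2.le)
  · rw [Finset.prod_mul_distrib, Finset.prod_pow]
    simp

open Polynomial in
lemma rsb_deriv {n : ℕ} (S : ℂ[X]) (a : ℂ) (α : Fin n → ℂ)
    (hS : S = C a * ∏ i, (X - C (α i))) (i : Fin n) :
    (derivative S).eval (α i) = a * ∏ j ∈ {i}ᶜ, (α i - α j) := by
  have : ∏ i, (X - C (α i)) = (X - C (α i)) * ∏ j ∈ {i}ᶜ, (X - C (α j)) :=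
    Fintype.prod_eq_mul_prod_compl i _
  rw [hS, this]
  simp [derivative_mul, eval_prod]

open Polynomial in
lemma rsb_disc {n : ℕ} (s : ℤ[X]) (hs0 : s ≠ 0) (hn : s.natDegree = n)
    (α : Fin n → ℂ) (hα : Function.Injective α)
    (hr : Multiset.map α Finset.univ.val = (s.map (Int.castRingHom ℂ)).roots) :
    1 ≤ ‖(s.leadingCoeff : ℂ)‖ ^ n * ‖(Matrix.vandermonde α).det‖ := by
  set S := s.map (Int.castRingHom ℂ) with hSdef
  have hinj : Function.Injective (Int.castRingHom ℂ) := (Int.castRingHom ℂ).injective_int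
  have hlc : S.leadingCoeff = (s.leadingCoeff : ℂ) := by
    rw [hSdef, leadingCoeff_map_of_injective hinj, eq_intCast]
  have hSn : S.natDegree = n := by rw [hSdef, natDegree_map_eq_of_injective hinj, hn]
  set a : ℂ := (s.leadingCoeff : ℂ) with ha
  have ha1 : 1 ≤ ‖a‖ := by
    rw [ha, Complex.norm_intCast]
    exact_mod_cast Int.one_le_abs (leadingCoeff_ne_zero.mpr hs0)
  have hSp : S = C a * ∏ i, (X - C (α i)) := by
    rw [← hlc]
    conv_lhs => rw [(IsAlgClosed.splits S).eq_prod_roots]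
    rw [← hr, Multiset.map_map]
    rfl
  have hres := resultant_eq_prod_eval S (derivative S) (n - 1)
    ((natDegree_derivative_le S).trans (by omega)) (IsAlgClosed.splits S)
  rw [← hr, Multiset.map_map, hlc] at hres
  have hprod : (Multiset.map ((fun x => eval x (derivative S)) ∘ α) Finset.univ.val).prod
      = ∏ i, (a * ∏ j ∈ {i}ᶜ, (α i - α j)) := by
    rw [← Finset.prod_congr rfl (fun i _ => rsb_deriv S a α hSp i)]
    rfl
  rw [hprod] at hres
  have hne : S.resultant (derivative S) S.natDegree (n - 1) ≠ 0 := by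
    rw [hres]
    have ha0 : a ≠ 0 := by
      intro h; rw [h] at ha1; norm_num at ha1
    refine mul_ne_zero (pow_ne_zero _ ha0) (Finset.prod_ne_zero_iff.2 fun i _ =>
      mul_ne_zero ha0 (Finset.prod_ne_zero_iff.2 fun j hj => sub_ne_zero.2 fun h => ?_))
    have := hα h
    simp [this] at hj
  have hint : S.resultant (derivative S) S.natDegree (n - 1)
      = ((s.resultant (derivative s) S.natDegree (n - 1) : ℤ) : ℂ) := by
    rw [hSdef, derivative_map, resultant_map_map]; simp
  have hge : 1 ≤ ‖S.resultant (derivative S) S.natDegree (n - 1)‖ := by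
    rw [hint] at hne ⊢
    rw [Complex.norm_intCast]
    exact_mod_cast Int.one_le_abs (by exact_mod_cast hne)
  have hV : ‖∏ i, ∏ j ∈ {i}ᶜ, (α i - α j)‖ = ‖(Matrix.vandermonde α).det‖ ^ 2 := by
    rw [Matrix.det_vandermonde,
      ← Finset.prod_prod_Ioi_mul_eq_prod_prod_off_diag (fun j i => α i - α j)]
    simp only [norm_prod, norm_mul, ← Finset.prod_pow]
    refine Finset.prod_congr rfl fun i _ => Finset.prod_congr rfl fun j _ => ?_
    rw [norm_sub_rev (α i) (α j), sq]
  rw [hres, Finset.prod_mul_distrib, norm_mul, norm_mul, hV] at hge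
  simp only [norm_pow, Finset.prod_const, Finset.card_univ, Fintype.card_fin] at hge
  have h2 : 1 ≤ (‖a‖ ^ n * ‖(Matrix.vandermonde α).det‖) ^ 2 := by
    refine hge.trans ?_
    have : ‖a‖ ^ (n - 1) ≤ ‖a‖ ^ n := pow_le_pow_right₀ ha1 (by omega)
    calc _ ≤ ‖a‖ ^ n * (‖a‖ ^ n * ‖(Matrix.vandermonde α).det‖ ^ 2) := by gcongr
      _ = _ := by ring
  by_contra hcon
  push Not at hcon
  have := pow_lt_one₀ (by positivity) hcon (two_ne_zero)
  linarith

open Polynomial in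
lemma rsb_mahler_s9 (s : ℤ[X]) (hs0 : s ≠ 0) (hsep : (s.map (Int.castRingHom ℂ)).Separable)
    (z₁ z₂ : ℂ) (h₁ : aeval z₁ s = 0) (h₂ : aeval z₂ s = 0) (hne : z₁ ≠ z₂) :
    1 ≤ s.natDegree.factorial * s.natDegree * ‖z₁ - z₂‖ *
      (s.map (Int.castRingHom ℂ)).mahlerMeasure ^ (2 * s.natDegree) := by
  have hinj : Function.Injective (Int.castRingHom ℂ) := (Int.castRingHom ℂ).injective_int
  set S := s.map (Int.castRingHom ℂ) with hSdef
  set n := s.natDegree with hn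
  have hS0 : S ≠ 0 := (Polynomial.map_ne_zero_iff hinj).2 hs0
  have hcard : S.roots.toList.length = n := by
    rw [Multiset.length_toList, ← (IsAlgClosed.splits S).natDegree_eq_card_roots, hSdef,
      natDegree_map_eq_of_injective hinj]
  obtain ⟨α, hr⟩ : ∃ α : Fin n → ℂ, Multiset.map α Finset.univ.val = S.roots := by
    refine ⟨fun i => S.roots.toList.get (i.cast hcard.symm), ?_⟩
    conv_rhs => rw [← Multiset.coe_toList S.roots]
    rw [Fin.univ_val_map]
    congr 1
    apply List.ext_get <;> simp [hcard]
  have hα : Function.Injective α := by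
    have hnd := nodup_roots hsep
    rw [← hr] at hnd
    intro i j hij
    exact Multiset.inj_on_of_nodup_map hnd i (Finset.mem_univ i) j (Finset.mem_univ j) hij
  have hroot : ∀ z : ℂ, aeval z s = 0 → ∃ i, α i = z := by
    intro z hz
    have : z ∈ S.roots := by
      rw [mem_roots hS0, IsRoot, hSdef, eval_map]
      simpa [aeval_def] using hz
    rw [← hr, Multiset.mem_map] at this
    obtain ⟨i, _, hi⟩ := this
    exact ⟨i, hi⟩
  obtain ⟨i₁, rfl⟩ := hroot z₁ h₁
  obtain ⟨i₂, rfl⟩ := hroot z₂ h₂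
  have hd := rsb_disc s hs0 hn.symm α hα hr
  have hv := rsb_vand α i₁ i₂ (fun h => hne (by rw [h]))
  have hM : S.mahlerMeasure = ‖(s.leadingCoeff : ℂ)‖ * ∏ i, max 1 ‖α i‖ := by
    rw [mahlerMeasure_eq_leadingCoeff_mul_prod_roots, ← hr, Multiset.map_map, hSdef,
      leadingCoeff_map_of_injective hinj, eq_intCast]
    rfl
  have ha1 : 1 ≤ ‖(s.leadingCoeff : ℂ)‖ := by
    rw [Complex.norm_intCast]
    exact_mod_cast Int.one_le_abs (leadingCoeff_ne_zero.mpr hs0)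
  have hm : max 1 ‖α i₂‖ ≤ S.mahlerMeasure := by
    rw [hM]
    have h1 : max 1 ‖α i₂‖ ≤ ∏ i, max 1 ‖α i‖ := by
      rw [Fintype.prod_eq_mul_prod_compl i₂]
      exact le_mul_of_one_le_right (by positivity)
        (Finset.prod_induction _ (fun x : ℝ => 1 ≤ x)
          (fun _ _ ha hb => one_le_mul_of_one_le_of_one_le ha hb) le_rfl
          fun i _ => le_max_left _ _)
    exact h1.trans (le_mul_of_one_le_left (by positivity) ha1)
  calc (1:ℝ) ≤ _ := hd
    _ ≤ ‖(s.leadingCoeff : ℂ)‖ ^ n * (n.factorial *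
      ((∏ i, max 1 ‖α i‖) ^ n * (‖α i₁ - α i₂‖ * n * max 1 ‖α i₂‖ ^ n))) := by gcongr
    _ = n.factorial * n * ‖α i₁ - α i₂‖ * (S.mahlerMeasure ^ n * max 1 ‖α i₂‖ ^ n) := by
      rw [hM]; ring
    _ ≤ n.factorial * n * ‖α i₁ - α i₂‖ * (S.mahlerMeasure ^ n * S.mahlerMeasure ^ n) := by
      have := S.mahlerMeasure_nonneg
      gcongr
    _ = _ := by ring

open Polynomial in
lemma rsb_irred (P : ℤ[X]) (hP : P ≠ 0) (z : ℂ) (hz : aeval z P = 0) :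
    ∃ p : ℤ[X], p ∣ P ∧ aeval z p = 0 ∧ Irreducible (p.map (Int.castRingHom ℚ)) := by
  obtain ⟨f, hf, hfa⟩ := WfDvdMonoid.exists_factors P hP
  have h0 : aeval z f.prod = 0 := by
    obtain ⟨c, hc⟩ := hfa.symm.dvd
    rw [hc, map_mul, hz, zero_mul]
  rw [map_multiset_prod, Multiset.prod_eq_zero_iff, Multiset.mem_map] at h0
  obtain ⟨p, hp, hpz⟩ := h0
  refine ⟨p, (Multiset.dvd_prod hp).trans hfa.dvd, hpz, ?_⟩
  have hirr := hf p hp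
  refine (IsPrimitive.Int.irreducible_iff_irreducible_map_cast (hirr.isPrimitive ?_)).1 hirr
  intro hd
  obtain ⟨c, rfl⟩ := natDegree_eq_zero.1 hd
  simp at hpz
  subst hpz
  simp at hirr

open Polynomial in
lemma rsb_sqfree (P₁ P₂ : ℤ[X]) (hP₁ : P₁ ≠ 0) (hP₂ : P₂ ≠ 0) (z₁ z₂ : ℂ)
    (h₁ : aeval z₁ P₁ = 0) (h₂ : aeval z₂ P₂ = 0) :
    ∃ s : ℤ[X], s ∣ P₁ * P₂ ∧ aeval z₁ s = 0 ∧ aeval z₂ s = 0 ∧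
      (s.map (Int.castRingHom ℂ)).Separable := by
  obtain ⟨p, hp, hpz, hpi⟩ := rsb_irred P₁ hP₁ z₁ h₁
  obtain ⟨q, hq, hqz, hqi⟩ := rsb_irred P₂ hP₂ z₂ h₂
  have hmap : ∀ r : ℤ[X], (r.map (Int.castRingHom ℚ)).Separable →
      (r.map (Int.castRingHom ℂ)).Separable := by
    intro r hr
    have := hr.map (f := algebraMap ℚ ℂ)
    rw [Polynomial.map_map] at this
    have e : (algebraMap ℚ ℂ).comp (Int.castRingHom ℚ) = Int.castRingHom ℂ :=
      RingHom.ext_int _ _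
    rwa [e] at this
  by_cases hpz2 : aeval z₂ p = 0
  · exact ⟨p, hp.mul_right _, hpz, hpz2, hmap _ hpi.separable⟩
  · refine ⟨p * q, mul_dvd_mul hp hq, by simp [hpz], by simp [hqz], hmap _ ?_⟩
    rw [Polynomial.map_mul]
    refine hpi.separable.mul hqi.separable ?_
    refine IsCoprime.symm (hqi.coprime_iff_not_dvd.2 fun ⟨c, hc⟩ => hpz2 ?_)
    have e : ∀ r : ℤ[X], aeval z₂ (r.map (Int.castRingHom ℚ)) = aeval z₂ r := by
      intro r
      exact aeval_map_algebraMap ℚ z₂ r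
    rw [← e, hc, map_mul, e, hqz, zero_mul]

open Polynomial in
lemma rsb_mahler_le (P : ℤ[X]) (d : ℕ) (B : ℝ) (hd : P.natDegree ≤ d)
    (h : ∀ i : ℕ, (|P.coeff i| : ℝ) ≤ B) :
    (P.map (Int.castRingHom ℂ)).mahlerMeasure ≤ (d + 1) * B := by
  refine (mahlerMeasure_le_sum_norm_coeff _).trans ?_
  rw [sum_over_range' _ (by simp) (d + 1)
    (Nat.lt_succ_of_le (natDegree_map_le.trans hd))]
  have hb : ∀ i ∈ Finset.range (d + 1), ‖(P.map (Int.castRingHom ℂ)).coeff i‖ ≤ B := by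
    intro i _
    rw [coeff_map, eq_intCast, Complex.norm_intCast]
    exact_mod_cast h i
  refine (Finset.sum_le_sum hb).trans ?_
  simp

open Polynomial in
theorem rsb_core (P₁ P₂ : Polynomial ℤ) (d : ℕ) (B : ℝ) (hP₁ : P₁ ≠ 0) (hP₂ : P₂ ≠ 0)
    (hd₁ : P₁.natDegree ≤ d) (hd₂ : P₂.natDegree ≤ d) (hd : 2 ≤ d) (hB : 1 ≤ B)
    (hc₁ : ∀ i : ℕ, (|P₁.coeff i| : ℝ) ≤ B) (hc₂ : ∀ i : ℕ, (|P₂.coeff i| : ℝ) ≤ B)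
    (z₁ z₂ : ℂ) (h₁ : aeval z₁ P₁ = 0) (h₂ : aeval z₂ P₂ = 0) (hne : z₁ ≠ z₂) :
    1 ≤ (d : ℝ) ^ (21 * d) * B ^ (8 * d) * ‖z₁ - z₂‖ := by
  obtain ⟨s, ⟨r, hsr⟩, hs₁, hs₂, hsep⟩ := rsb_sqfree P₁ P₂ hP₁ hP₂ z₁ z₂ h₁ h₂
  have hP : P₁ * P₂ ≠ 0 := mul_ne_zero hP₁ hP₂
  have hs0 : s ≠ 0 := by rintro rfl; simp [hP₁, hP₂] at hsr
  have hr0 : r ≠ 0 := by rintro rfl; simp [hP₁, hP₂] at hsr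
  have hn : s.natDegree ≤ 2 * d := by
    have := congrArg natDegree hsr
    rw [natDegree_mul hP₁ hP₂, natDegree_mul hs0 hr0] at this
    omega
  have hm := rsb_mahler_s9 s hs0 hsep z₁ z₂ hs₁ hs₂ hne
  have hd' : (2:ℝ) ≤ d := by exact_mod_cast hd
  have hM : (s.map (Int.castRingHom ℂ)).mahlerMeasure ≤ ((d:ℝ) ^ 2 * B) ^ 2 := by
    have hr1 := one_le_mahlerMeasure_of_ne_zero hr0
    have e : (s.map (Int.castRingHom ℂ)).mahlerMeasure * (r.map (Int.castRingHom ℂ)).mahlerMeasure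
        = (P₁.map (Int.castRingHom ℂ)).mahlerMeasure *
          (P₂.map (Int.castRingHom ℂ)).mahlerMeasure := by
      rw [← mahlerMeasure_mul, ← mahlerMeasure_mul, ← Polynomial.map_mul, ← Polynomial.map_mul, hsr]
    have hle : (d + 1) * B ≤ (d:ℝ) ^ 2 * B := by
      gcongr; nlinarith
    have b1 := (rsb_mahler_le P₁ d B hd₁ hc₁).trans hle
    have b2 := (rsb_mahler_le P₂ d B hd₂ hc₂).trans hle
    calc _ ≤ _ := le_mul_of_one_le_right (mahlerMeasure_nonneg _) hr1
      _ = _ := e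
      _ ≤ ((d:ℝ) ^ 2 * B) * ((d:ℝ) ^ 2 * B) :=
        mul_le_mul b1 b2 (mahlerMeasure_nonneg _) (by positivity)
      _ = _ := by ring
  set n := s.natDegree
  have hM1 := one_le_mahlerMeasure_of_ne_zero hs0
  have hnD : (n : ℝ) ≤ (d:ℝ) ^ 2 := by
    have : (n : ℝ) ≤ 2 * d := by exact_mod_cast hn
    nlinarith
  have hfac : (n.factorial : ℝ) * n ≤ (d:ℝ) ^ (5 * d) := by
    have h1 : (n.factorial : ℝ) ≤ (n:ℝ) ^ n := by exact_mod_cast n.factorial_le_pow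
    have h0 : (1:ℝ) ≤ (d:ℝ) ^ 2 := by nlinarith
    calc (n.factorial : ℝ) * n ≤ (n:ℝ) ^ n * n := by gcongr
      _ = (n:ℝ) ^ (n + 1) := by ring
      _ ≤ ((d:ℝ) ^ 2) ^ (n + 1) := by gcongr
      _ ≤ ((d:ℝ) ^ 2) ^ (2 * d + 1) := pow_le_pow_right₀ h0 (by omega)
      _ = (d:ℝ) ^ (2 * (2 * d + 1)) := by rw [← pow_mul]
      _ ≤ _ := pow_le_pow_right₀ (by linarith) (by omega)
  have hMp : (s.map (Int.castRingHom ℂ)).mahlerMeasure ^ (2 * n)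
      ≤ (d:ℝ) ^ (16 * d) * B ^ (8 * d) := by
    calc _ ≤ (s.map (Int.castRingHom ℂ)).mahlerMeasure ^ (4 * d) :=
          pow_le_pow_right₀ hM1 (by omega)
      _ ≤ (((d:ℝ) ^ 2 * B) ^ 2) ^ (4 * d) := pow_le_pow_left₀ (by linarith) hM _
      _ = _ := by rw [← pow_mul, mul_pow, ← pow_mul]; congr 2 <;> ring
  calc (1:ℝ) ≤ _ := hm
    _ ≤ (d:ℝ) ^ (5 * d) * ‖z₁ - z₂‖ * ((d:ℝ) ^ (16 * d) * B ^ (8 * d)) := by gcongr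
    _ = (d:ℝ) ^ (5 * d + 16 * d) * B ^ (8 * d) * ‖z₁ - z₂‖ := by rw [pow_add]; ring
    _ = _ := by congr 3; ring


/-- Separation bound for roots of two different bounded integer polynomials:
there is an absolute constant `C > 0` such that if `P₁, P₂` are nonzero integer
polynomials of degree at most `d` (with `d ≥ 2`) and coefficients of absolute
value at most `2^τ` (with `τ ≥ 1`), then any complex root `z₁` of `P₁` and any
complex root `z₂` of `P₂` with `z₁ ≠ z₂` satisfy
`|z₁ - z₂| ≥ 2^{-C(d log d + τ d)}`. -/
theorem root_separation_bound_two_polys :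
    ∃ C : ℝ, 0 < C ∧ ∀ (P₁ P₂ : Polynomial ℤ) (d : ℕ) (τ : ℝ),
      P₁ ≠ 0 → P₂ ≠ 0 → P₁.natDegree ≤ d → P₂.natDegree ≤ d → 2 ≤ d → 1 ≤ τ →
      (∀ i : ℕ, (|P₁.coeff i| : ℝ) ≤ (2 : ℝ) ^ τ) →
      (∀ i : ℕ, (|P₂.coeff i| : ℝ) ≤ (2 : ℝ) ^ τ) →
      ∀ z₁ z₂ : ℂ, Polynomial.aeval z₁ P₁ = 0 → Polynomial.aeval z₂ P₂ = 0 →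
        z₁ ≠ z₂ →
        (2 : ℝ) ^ (-(C * ((d : ℝ) * Real.log d + τ * d))) ≤ ‖z₁ - z₂‖ := by
  refine ⟨42, by norm_num, ?_⟩
  intro P₁ P₂ d τ hP₁ hP₂ hd₁ hd₂ hd hτ hc₁ hc₂ z₁ z₂ h₁ h₂ hne
  have hB : (1:ℝ) ≤ (2:ℝ) ^ τ := Real.one_le_rpow (by norm_num) (by linarith)
  have key := rsb_core P₁ P₂ d _ hP₁ hP₂ hd₁ hd₂ hd hB hc₁ hc₂ z₁ z₂ h₁ h₂ hne
  have hd' : (2:ℝ) ≤ d := by exact_mod_cast hd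
  have hl : 0 ≤ Real.log d := Real.log_nonneg (by linarith)
  have hdle : (d:ℝ) ≤ (2:ℝ) ^ (2 * Real.log d) := by
    rw [Real.rpow_def_of_pos (by norm_num)]
    calc (d:ℝ) = Real.exp (Real.log d) := (Real.exp_log (by linarith)).symm
      _ ≤ _ := Real.exp_le_exp.2 (by nlinarith [Real.log_two_gt_d9])
  have h3 : (d : ℝ) ^ (21 * d) * ((2:ℝ) ^ τ) ^ (8 * d)
      ≤ (2:ℝ) ^ (42 * ((d : ℝ) * Real.log d + τ * d)) := by
    calc _ ≤ ((2:ℝ) ^ (2 * Real.log d)) ^ (21 * d) * ((2:ℝ) ^ τ) ^ (8 * d) := by gcongr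
      _ = (2:ℝ) ^ (2 * Real.log d * (21 * d : ℕ) + τ * (8 * d : ℕ)) := by
        rw [← Real.rpow_mul_natCast (by norm_num), ← Real.rpow_mul_natCast (by norm_num),
          ← Real.rpow_add (by norm_num)]
      _ ≤ _ := by
        apply Real.rpow_le_rpow_of_exponent_le (by norm_num)
        push_cast
        nlinarith [mul_nonneg (by linarith : 0 ≤ τ) (by linarith : 0 ≤ (d:ℝ))]
  rw [Real.rpow_neg (by norm_num)]
  have h4 : 1 ≤ (2:ℝ) ^ (42 * ((d : ℝ) * Real.log d + τ * d)) * ‖z₁ - z₂‖ :=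
    key.trans (by gcongr)
  exact (inv_le_iff_one_le_mul₀' (by positivity)).2 h4
end

section
/- (Fixed points of superoperators, Aaronson–Watrous.) Let ℰ(ρ) = Σ_{j∈J} E_j ρ E_j† be a superoperator on S×S complex matrices, given by a finite family of Kraus matrices E_j ∈ ℂ^{S×S} satisfying Σ_{j∈J} E_j† E_j = I. Then there exists a superoperator ℰ_fix, given by a finite family of Kraus matrices F_j ∈ ℂ^{S×S} with Σ_j F_j† F_j = I (so ℰ_fix(ρ) = Σ_j F_j ρ F_j†), such that: (i) for every density matrix ρ, ℰ_fix(ρ) is a fixed point of ℰ, i.e., ℰ(ℰ_fix(ρ)) = ℰ_fix(ρ); and (ii) every density matrix ρ that is a fixed point of ℰ (i.e., ℰ(ρ) = ρ) is also a fixed point of ℰ_fix (i.e., ℰ_fix(ρ) = ρ). -/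
open Matrix
open scoped ComplexOrder

/-- A density matrix: positive semidefinite (hence Hermitian) with trace 1. -/
def IsDensityMatrix {S : ℕ} (ρ : Matrix (Fin S) (Fin S) ℂ) : Prop :=
  ρ.PosSemidef ∧ ρ.trace = 1

section Helpers

abbrev SOMat (S : ℕ) := Matrix (Fin S) (Fin S) ℂ

/-- Superoperator of a Kraus family. -/
def soOp {S : ℕ} {ι : Type} [Fintype ι] (F : ι → SOMat S) : SOMat S →ₗ[ℂ] SOMat S where
  toFun ρ := ∑ i, F i * ρ * (F i)ᴴ
  map_add' x y := by simp [mul_add, add_mul, Finset.sum_add_distrib]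
  map_smul' c x := by simp [Finset.smul_sum]

lemma soOp_apply {S : ℕ} {ι : Type} [Fintype ι] (F : ι → SOMat S) (ρ : SOMat S) :
    soOp F ρ = ∑ i, F i * ρ * (F i)ᴴ := rfl

def soK (S : ℕ) : Set (Fin S × Fin S → SOMat S) := {F | ∑ i, (F i)ᴴ * F i = 1}

lemma soK_compact (S : ℕ) : IsCompact (soK S) := by
  have hc : IsCompact (Set.univ.pi fun _ : Fin S × Fin S =>
      (Set.univ.pi fun _ : Fin S => Set.univ.pi fun _ : Fin S => Metric.closedBall (0:ℂ) 1 :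
        Set (SOMat S))) :=
    isCompact_univ_pi fun _ => isCompact_univ_pi fun _ => isCompact_univ_pi fun _ =>
      isCompact_closedBall _ _
  refine hc.of_isClosed_subset ?_ ?_
  · apply isClosed_eq
    · fun_prop
    · fun_prop
  · intro F hF k _ a _ c _
    have h : ∑ i, ∑ b, ‖F i b c‖ ^ 2 = 1 := by
      have h1 := congrFun (congrFun hF c) c
      simp only [Matrix.sum_apply, Matrix.one_apply_eq] at h1
      have h2 : ((∑ i, ∑ b, ‖F i b c‖ ^ 2 : ℝ) : ℂ) = 1 := by
        rw [← h1]; push_cast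
        refine Finset.sum_congr rfl fun i _ => Finset.sum_congr rfl fun b _ => ?_
        exact (Complex.conj_mul' _).symm
      exact_mod_cast h2
    have h3 : ‖F k a c‖ ^ 2 ≤ 1 := by
      rw [← h]
      calc ‖F k a c‖ ^ 2 ≤ ∑ b, ‖F k b c‖ ^ 2 :=
            Finset.single_le_sum (f := fun b => ‖F k b c‖ ^ 2) (fun _ _ => by positivity)
              (Finset.mem_univ a)
        _ ≤ _ := Finset.single_le_sum (f := fun i => ∑ b, ‖F i b c‖ ^ 2)
              (fun _ _ => by positivity) (Finset.mem_univ k)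
    rw [mem_closedBall_zero_iff]
    nlinarith [norm_nonneg (F k a c)]

lemma so_entry {S : ℕ} {ι : Type} [Fintype ι] (F : ι → SOMat S) (ρ : SOMat S) (a b : Fin S) :
    soOp F ρ a b = ∑ d, ∑ c, (∑ i, F i a c * star (F i b d)) * ρ c d := by
  simp only [soOp_apply, Matrix.sum_apply, Matrix.mul_apply, Matrix.conjTranspose_apply,
    Finset.sum_mul]
  rw [Finset.sum_comm]
  refine Finset.sum_congr rfl fun d _ => ?_
  rw [Finset.sum_comm]
  refine Finset.sum_congr rfl fun c _ => Finset.sum_congr rfl fun i _ => ?_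
  ring

open scoped MatrixOrder Matrix.Norms.L2Operator in
lemma so_reduce {S : ℕ} {ι : Type} [Fintype ι] (G : ι → SOMat S)
    (hG : ∑ i, (G i)ᴴ * G i = 1) : ∃ F ∈ soK S, soOp F = soOp G := by
  let M : Matrix (Fin S × Fin S) ι ℂ := fun p i => G i p.1 p.2
  obtain ⟨B, hB⟩ : ∃ B : Matrix (Fin S × Fin S) (Fin S × Fin S) ℂ, M * Mᴴ = Bᴴ * B :=
    CStarAlgebra.nonneg_iff_eq_star_mul_self.1 (Matrix.posSemidef_self_mul_conjTranspose M).nonneg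
  have key : ∀ a c b d, ∑ k, star (B k (a, c)) * star (star (B k (b, d)))
      = ∑ i, G i a c * star (G i b d) := by
    intro a c b d
    have := congrFun (congrFun hB (a, c)) (b, d)
    simp only [Matrix.mul_apply, Matrix.conjTranspose_apply, M] at this
    simp only [star_star]
    exact this.symm
  refine ⟨fun k => Matrix.of fun a c => star (B k (a, c)), ?_, ?_⟩
  · show _ = _
    rw [← hG]
    ext c d
    simp only [Matrix.sum_apply, Matrix.mul_apply, Matrix.conjTranspose_apply, Matrix.of_apply]
    rw [Finset.sum_comm]
    conv_rhs => rw [Finset.sum_comm]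
    refine Finset.sum_congr rfl fun a _ => ?_
    have := key a d a c
    simp only [mul_comm (star (star _))]
    rw [this]
    exact Finset.sum_congr rfl fun i _ => mul_comm _ _
  · ext1 ρ
    ext a b
    rw [so_entry, so_entry]
    refine Finset.sum_congr rfl fun d _ => Finset.sum_congr rfl fun c _ => ?_
    rw [← key]
    rfl

/-- Channels. -/
def soCh {S : ℕ} (T : SOMat S →ₗ[ℂ] SOMat S) : Prop := ∃ F ∈ soK S, soOp F = T

lemma soCh_one (S : ℕ) : soCh (1 : SOMat S →ₗ[ℂ] SOMat S) := by
  obtain ⟨F, hF, h⟩ := so_reduce (fun _ : Unit => (1 : SOMat S)) (by simp)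
  refine ⟨F, hF, h.trans ?_⟩
  ext1 ρ
  simp [soOp_apply]

lemma soCh_mul {S : ℕ} {T U : SOMat S →ₗ[ℂ] SOMat S} (hT : soCh T) (hU : soCh U) :
    soCh (T * U) := by
  obtain ⟨F, hF, rfl⟩ := hT
  obtain ⟨G, hG, rfl⟩ := hU
  obtain ⟨H, hH, h⟩ := so_reduce (fun p : (Fin S × Fin S) × (Fin S × Fin S) => F p.1 * G p.2) (by
    rw [Fintype.sum_prod_type_right]
    have : ∀ y, ∑ x, (F x * G y)ᴴ * (F x * G y) = (G y)ᴴ * G y := by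
      intro y
      have hF' : ∑ i, (F i)ᴴ * F i = 1 := hF
      calc _ = (G y)ᴴ * (∑ i, (F i)ᴴ * F i) * G y := by
            simp [Finset.mul_sum, Finset.sum_mul, Matrix.mul_assoc]
        _ = _ := by rw [hF']; simp
    simp only [this]
    exact hG)
  refine ⟨H, hH, h.trans ?_⟩
  ext1 ρ
  simp only [soOp_apply, Module.End.mul_apply, Fintype.sum_prod_type]
  simp [Finset.mul_sum, Finset.sum_mul, Matrix.mul_assoc]

lemma soCh_convex {S : ℕ} {T U : SOMat S →ₗ[ℂ] SOMat S} (hT : soCh T) (hU : soCh U)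
    (p q : ℝ) (hp : 0 ≤ p) (hq : 0 ≤ q) (hpq : p + q = 1) :
    soCh ((p : ℂ) • T + (q : ℂ) • U) := by
  obtain ⟨F, hF, rfl⟩ := hT
  obtain ⟨G, hG, rfl⟩ := hU
  have hF' : ∑ i, (F i)ᴴ * F i = 1 := hF
  have hG' : ∑ i, (G i)ᴴ * G i = 1 := hG
  have sp : (Real.sqrt p : ℂ) * (Real.sqrt p : ℂ) = p := by
    exact_mod_cast Real.mul_self_sqrt hp
  have sq : (Real.sqrt q : ℂ) * (Real.sqrt q : ℂ) = q := by
    exact_mod_cast Real.mul_self_sqrt hq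
  obtain ⟨H, hH, h⟩ := so_reduce (Sum.elim (fun i => (Real.sqrt p : ℂ) • F i)
      (fun i => (Real.sqrt q : ℂ) • G i)) (by
    simp only [Fintype.sum_sum_type, Sum.elim_inl, Sum.elim_inr, Matrix.conjTranspose_smul,
      Matrix.smul_mul, Matrix.mul_smul, smul_smul, Complex.star_def, Complex.conj_ofReal, sp, sq,
      ← Finset.smul_sum, hF', hG', ← add_smul]
    rw [← Complex.ofReal_add, hpq]; simp)
  refine ⟨H, hH, h.trans ?_⟩
  ext1 ρ
  simp only [soOp_apply, Fintype.sum_sum_type, Sum.elim_inl, Sum.elim_inr,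
    Matrix.conjTranspose_smul,
    Matrix.smul_mul, Matrix.mul_smul, smul_smul, Complex.star_def, Complex.conj_ofReal, sp, sq,
    ← Finset.smul_sum, LinearMap.add_apply, LinearMap.smul_apply]

lemma soCh_pow {S : ℕ} {T : SOMat S →ₗ[ℂ] SOMat S} (hT : soCh T) (n : ℕ) : soCh (T ^ n) := by
  induction n with
  | zero => simpa using soCh_one S
  | succ n ih => rw [pow_succ]; exact soCh_mul ih hT

lemma soCh_avg {S : ℕ} {T : SOMat S →ₗ[ℂ] SOMat S} (hT : soCh T) (n : ℕ) :
    soCh (((n : ℂ) + 1)⁻¹ • ∑ k ∈ Finset.range (n + 1), T ^ k) := by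
  induction n with
  | zero => simpa using soCh_one S
  | succ n ih =>
    have := soCh_convex ih (soCh_pow hT (n + 1)) (((n : ℝ) + 1) / (n + 2)) (1 / (n + 2))
      (by positivity) (by positivity) (by field_simp; ring)
    convert this using 1
    rw [Finset.sum_range_succ _ (n + 1), smul_add, smul_smul]
    have h1 : (n : ℂ) + 1 ≠ 0 := by exact_mod_cast Nat.succ_ne_zero n
    have h2 : (n : ℂ) + 2 ≠ 0 := by exact_mod_cast Nat.succ_ne_zero (n + 1)
    have h3 : (n : ℂ) + 1 + 1 ≠ 0 := by exact_mod_cast Nat.succ_ne_zero (n + 1)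
    congr 2 <;> push_cast <;> field_simp <;> ring

lemma soOp_cont {S : ℕ} (ρ : SOMat S) :
    Continuous fun F : Fin S × Fin S → SOMat S => soOp F ρ := by
  simp only [soOp_apply]
  fun_prop

lemma soCh_bdd {S : ℕ} (ρ : SOMat S) (a b : Fin S) :
    ∃ C : ℝ, ∀ T : SOMat S →ₗ[ℂ] SOMat S, soCh T → ‖T ρ a b‖ ≤ C := by
  have hc : Continuous fun F : Fin S × Fin S → SOMat S => soOp F ρ a b :=
    (soOp_cont ρ).matrix_elem a b
  obtain ⟨C, hC⟩ := (soK_compact S).exists_bound_of_continuousOn hc.continuousOn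
  refine ⟨C, ?_⟩
  rintro T ⟨F, hF, rfl⟩
  exact hC F hF

lemma so_main {S : ℕ} {T : SOMat S →ₗ[ℂ] SOMat S} (hT : soCh T) :
    ∃ F ∈ soK S, (∀ ρ, T (soOp F ρ) = soOp F ρ) ∧ ∀ ρ, T ρ = ρ → soOp F ρ = ρ := by
  haveI : FirstCountableTopology (SOMat S) :=
    inferInstanceAs (FirstCountableTopology (Fin S → Fin S → ℂ))
  choose G hG hGT using soCh_avg hT
  obtain ⟨F, hF, φ, hφ, hlim⟩ := (soK_compact S).tendsto_subseq hG
  have hl : ∀ ρ, Filter.Tendsto (fun n => soOp (G (φ n)) ρ) Filter.atTop (nhds (soOp F ρ)) :=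
    fun ρ => ((soOp_cont ρ).tendsto F).comp hlim
  have hTc : Continuous T := by
    obtain ⟨E, _, rfl⟩ := hT
    show Continuous fun ρ => soOp E ρ
    simp only [soOp_apply]
    fun_prop
  refine ⟨F, hF, fun ρ => ?_, fun ρ hρ => ?_⟩
  · have h1 : Filter.Tendsto (fun n => T (soOp (G (φ n)) ρ) - soOp (G (φ n)) ρ) Filter.atTop
        (nhds (T (soOp F ρ) - soOp F ρ)) :=
      ((hTc.tendsto _).comp (hl ρ)).sub (hl ρ)
    have h2 : ∀ n, T (soOp (G n) ρ) - soOp (G n) ρ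
        = ((n : ℂ) + 1)⁻¹ • ((T ^ (n + 1)) ρ - ρ) := by
      intro n
      rw [hGT]
      simp only [LinearMap.smul_apply, map_smul, LinearMap.sum_apply, map_sum, ← smul_sub]
      congr 1
      rw [← Finset.sum_sub_distrib]
      have := Finset.sum_range_sub (fun k => (T ^ k) ρ) (n + 1)
      simp only [pow_zero, Module.End.one_apply] at this
      rw [← this]
      refine Finset.sum_congr rfl fun k _ => ?_
      rw [pow_succ', Module.End.mul_apply]
    have h3 : Filter.Tendsto (fun n => T (soOp (G n) ρ) - soOp (G n) ρ) Filter.atTop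
        (nhds 0) := by
      refine tendsto_pi_nhds.2 fun a => tendsto_pi_nhds.2 fun b => ?_
      obtain ⟨C, hC⟩ := soCh_bdd ρ a b
      have h4 : Filter.Tendsto (fun n : ℕ => (1 / ((n : ℝ) + 1)) * (C + ‖ρ a b‖)) Filter.atTop
          (nhds 0) := by
        simpa using (tendsto_one_div_add_atTop_nhds_zero_nat (𝕜 := ℝ)).mul_const (C + ‖ρ a b‖)
      refine squeeze_zero_norm (fun n => ?_) h4
      rw [h2]
      simp only [Matrix.smul_apply, Matrix.sub_apply, smul_eq_mul, norm_mul, norm_inv]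
      have h5 : ‖(n : ℂ) + 1‖ = (n : ℝ) + 1 := by
        have := Complex.norm_natCast (n + 1)
        push_cast at this
        exact this
      rw [h5, one_div]
      gcongr
      exact (norm_sub_le _ _).trans (by gcongr; exact hC _ (soCh_pow hT _))
    exact sub_eq_zero.1 (tendsto_nhds_unique h1 (h3.comp hφ.tendsto_atTop))
  · have hk : ∀ k, (T ^ k) ρ = ρ := by
      intro k
      induction k with
      | zero => simp
      | succ k ih => rw [pow_succ, Module.End.mul_apply, hρ, ih]
    have h1 : ∀ n, soOp (G n) ρ = ρ := by
      intro n
      rw [hGT]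
      simp only [LinearMap.smul_apply, LinearMap.sum_apply, hk, Finset.sum_const,
        Finset.card_range]
      rw [← Nat.cast_smul_eq_nsmul ℂ, smul_smul]
      have h1 : (n : ℂ) + 1 ≠ 0 := by exact_mod_cast Nat.succ_ne_zero n
      push_cast
      rw [inv_mul_cancel₀ h1, one_smul]
    have := hl ρ
    simp only [h1] at this
    exact tendsto_nhds_unique this tendsto_const_nhds

end Helpers

/-- Aaronson–Watrous fixed-point theorem for superoperators: given a
superoperator `ℰ(ρ) = Σ_j E_j ρ E_j†` with `Σ_j E_j† E_j = I`, there is a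
superoperator `ℰ_fix(ρ) = Σ_j F_j ρ F_j†` (with `Σ_j F_j† F_j = I`) such that
(i) `ℰ_fix(ρ)` is a fixed point of `ℰ` for every density matrix `ρ`, and
(ii) every density matrix fixed by `ℰ` is fixed by `ℰ_fix`. -/
theorem superoperator_fixed_points {S r : ℕ}
    (E : Fin r → Matrix (Fin S) (Fin S) ℂ)
    (hE : ∑ j, (E j)ᴴ * E j = 1) :
    ∃ (r' : ℕ) (F : Fin r' → Matrix (Fin S) (Fin S) ℂ),
      (∑ j, (F j)ᴴ * F j = 1) ∧
      (∀ ρ : Matrix (Fin S) (Fin S) ℂ, IsDensityMatrix ρ →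
        (∑ j, E j * (∑ i, F i * ρ * (F i)ᴴ) * (E j)ᴴ) = ∑ i, F i * ρ * (F i)ᴴ) ∧
      (∀ ρ : Matrix (Fin S) (Fin S) ℂ, IsDensityMatrix ρ →
        (∑ j, E j * ρ * (E j)ᴴ) = ρ → (∑ i, F i * ρ * (F i)ᴴ) = ρ) := by
  obtain ⟨F, hF, h1, h2⟩ := so_main (so_reduce E hE)
  have hF' : ∑ i, (F i)ᴴ * F i = 1 := hF
  let e := Fintype.equivFin (Fin S × Fin S)
  have hs : ∀ ρ, ∑ i, F (e.symm i) * ρ * (F (e.symm i))ᴴ = soOp F ρ := fun ρ =>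
    Equiv.sum_comp e.symm (fun i => F i * ρ * (F i)ᴴ)
  refine ⟨_, fun i => F (e.symm i), ?_, fun ρ _ => ?_, fun ρ _ h => ?_⟩
  · rw [← hF']
    exact Equiv.sum_comp e.symm (fun i => (F i)ᴴ * F i)
  · rw [hs]; exact h1 ρ
  · rw [hs]; exact h2 ρ h
end

section
/- (Rationality of the limiting functional, matrix form of Lemma 4.1.) Let B₀ and B₁ be m×m complex matrices such that for every p ∈ [0,1], all eigenvalues of B_p := p·B₁ + (1−p)·B₀ have absolute value at most 1 (so that I − (1−z)B_p is invertible for z ∈ (0,1)). Fix vectors x, y ∈ ℂ^m and suppose that |x† (z·(I − (1−z)B_p)^{−1}) y| ≤ 1 for all real z ∈ (0,1) and p ∈ (0,1). Then there exist polynomials Q and R with complex coefficients, each of degree at most m, with R not identically zero, such that for every p ∈ (0,1) with R(p) ≠ 0, the limit lim_{z→0⁺} x† (z·(I − (1−z)B_p)^{−1}) y exists and equals Q(p)/R(p). -/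
open Matrix Filter Polynomial


theorem lim_aux (D N : ℂ[X]) (k : ℕ) (h0 : ∀ j < k, D.coeff j = 0) (hk : D.coeff k ≠ 0)
    (f : ℝ → ℂ) (hf : ∀ z : ℝ, z ∈ Set.Ioo (0:ℝ) 1 → ‖f z‖ ≤ 1)
    (hfe : ∀ z : ℝ, D.eval (z:ℂ) ≠ 0 → f z = N.eval (z:ℂ) / D.eval (z:ℂ)) :
    Tendsto f (nhdsWithin 0 (Set.Ioi 0)) (nhds (N.coeff k / D.coeff k)) := by
  obtain ⟨D', rfl⟩ := Polynomial.X_pow_dvd_iff.2 h0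
  have hc : ∀ P : ℂ[X], (X ^ k * P).coeff k = P.eval 0 := by
    intro P
    rw [← Polynomial.coeff_zero_eq_eval_zero, Polynomial.coeff_X_pow_mul']
    simp
  have ht : ∀ P : ℂ[X], Tendsto (fun z : ℝ => P.eval (z:ℂ)) (nhdsWithin 0 (Set.Ioi 0))
      (nhds (P.eval 0)) := by
    intro P
    have : Continuous (fun z : ℝ => P.eval (z:ℂ)) :=
      P.continuous.comp Complex.continuous_ofReal
    have h := this.tendsto 0
    simp only [Complex.ofReal_zero] at h
    exact h.mono_left nhdsWithin_le_nhds
  rw [hc] at hk ⊢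
  have hpos : ∀ᶠ z : ℝ in nhdsWithin 0 (Set.Ioi 0), z ∈ Set.Ioo (0:ℝ) 1 :=
    Ioo_mem_nhdsGT one_pos
  have hD' : ∀ᶠ z : ℝ in nhdsWithin 0 (Set.Ioi 0), D'.eval (z:ℂ) ≠ 0 :=
    (ht D').eventually_ne hk
  have hdvd : ∀ j ≤ k, (X:ℂ[X]) ^ j ∣ N := by
    intro j
    induction j with
    | zero => intro _; simp
    | succ j ih =>
      intro hj
      obtain ⟨N', rfl⟩ := ih (by omega)
      rw [pow_succ]
      apply mul_dvd_mul_left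
      rw [Polynomial.X_dvd_iff, Polynomial.coeff_zero_eq_eval_zero]
      refine tendsto_nhds_unique (ht N') ?_
      have h1 : Tendsto (fun z : ℝ => ‖((X:ℂ[X]) ^ (k - j) * D').eval (z:ℂ)‖)
          (nhdsWithin 0 (Set.Ioi 0)) (nhds 0) := by
        have := (ht (X ^ (k - j) * D')).norm
        have hkj : k - j ≠ 0 := by omega
        simpa [hkj] using this
      refine squeeze_zero_norm' ?_ h1
      filter_upwards [hpos, hD'] with z hz hz'
      have hz0 : (z:ℂ) ≠ 0 := by exact_mod_cast hz.1.ne'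
      have hne : (X ^ k * D' : ℂ[X]).eval (z:ℂ) ≠ 0 := by
        simp [hz0, hz']
      have e := hfe z hne
      have b := hf z hz
      rw [eq_div_iff hne] at e
      have hpow : (z:ℂ) ^ k = z ^ j * z ^ (k - j) := by
        rw [← pow_add]; congr 1; omega
      have : N'.eval (z:ℂ) = f z * ((X:ℂ[X]) ^ (k - j) * D').eval (z:ℂ) := by
        have hzj : (z:ℂ) ^ j ≠ 0 := pow_ne_zero _ hz0
        apply mul_left_cancel₀ hzj
        simp only [eval_mul, eval_pow, eval_X] at e ⊢
        rw [← e, hpow]; ring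
      rw [this, norm_mul]
      exact mul_le_of_le_one_left (norm_nonneg _) b
  obtain ⟨N', rfl⟩ := hdvd k le_rfl
  rw [hc]
  refine ((ht N').div (ht D') hk).congr' ?_
  filter_upwards [hpos, hD'] with z hz hz'
  have hz0 : (z:ℂ) ≠ 0 := by exact_mod_cast hz.1.ne'
  have hne : (X ^ k * D' : ℂ[X]).eval (z:ℂ) ≠ 0 := by
    simp [hz0, hz']
  rw [hfe z hne]
  simp only [eval_mul, eval_pow, eval_X, Pi.div_apply]
  rw [mul_div_mul_left _ _ (pow_ne_zero _ hz0)]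

theorem det_aux {m : ℕ} (B₀ B₁ V : Matrix (Fin m) (Fin m) ℂ) :
    ∃ d : ℕ → ℂ[X], ∀ z p : ℂ,
      ((1 : Matrix (Fin m) (Fin m) ℂ) - (1 - z) • (p • B₁ + (1 - p) • B₀) + V).det =
        ∑ i ∈ Finset.range (m + 1), (d i).eval z * p ^ i := by
  let P : Matrix (Fin m) (Fin m) ℂ[X] :=
    -((1 - X : ℂ[X]) • ((B₁ - B₀).map C))
  let S : Matrix (Fin m) (Fin m) ℂ[X] :=
    1 - (1 - X : ℂ[X]) • (B₀.map C) + V.map C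
  let G : ℂ[X][X] := det ((X : ℂ[X][X]) • P.map C + S.map C)
  refine ⟨fun i => G.coeff i, fun z p => ?_⟩
  have hdeg : G.natDegree ≤ m := by
    simpa using Polynomial.natDegree_det_X_add_C_le P S
  have h1 : (G.map (evalRingHom z)).eval p =
      ∑ i ∈ Finset.range (m + 1), (G.coeff i).eval z * p ^ i := by
    rw [Polynomial.eval_eq_sum_range' (n := m + 1)]
    · simp
    · exact lt_of_le_of_lt natDegree_map_le (by omega)
  rw [← h1]
  have h2 : (G.map (evalRingHom z)).eval p =
      ((evalRingHom p).comp (mapRingHom (evalRingHom z))) G := by simp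
  rw [h2]
  simp only [G]
  rw [RingHom.map_det]
  congr 1
  ext i j
  by_cases hij : i = j
  · subst hij
    simp [P, S]; ring
  · simp [P, S, hij]; ring

theorem rank_one_aux {m : ℕ} (A : Matrix (Fin m) (Fin m) ℂ) (hA : A.det ≠ 0) (x y : Fin m → ℂ) :
    x ⬝ᵥ (A⁻¹.mulVec y) = ((A + vecMulVec y x).det - A.det) / A.det := by
  have h : (A + vecMulVec y x).det = A.det * (1 + x ⬝ᵥ (A⁻¹.mulVec y)) := by
    rw [← Matrix.det_one_add_replicateCol_mul_replicateRow (ι := Unit) (A⁻¹.mulVec y) x,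
      ← Matrix.vecMulVec_eq, ← det_mul, Matrix.mul_add, Matrix.mul_one, Matrix.mul_vecMulVec,
      Matrix.mulVec_mulVec, Matrix.mul_nonsing_inv _ (isUnit_iff_ne_zero.2 hA), Matrix.one_mulVec]
  rw [h]
  field_simp
  ring

/-- Rationality of the limiting functional (matrix form of Lemma 4.1): if all
eigenvalues of `B_p = p B₁ + (1-p) B₀` have absolute value at most `1` for
`p ∈ [0,1]`, and `|x† (z (I - (1-z)B_p)⁻¹) y| ≤ 1` for `z, p ∈ (0,1)`, then
there are polynomials `Q, R` of degree at most `m` with `R ≠ 0` such that for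
every `p ∈ (0,1)` with `R(p) ≠ 0`, the limit as `z → 0⁺` of
`x† (z (I - (1-z)B_p)⁻¹) y` exists and equals `Q(p)/R(p)`. -/
theorem limiting_functional_rational {m : ℕ}
    (B₀ B₁ : Matrix (Fin m) (Fin m) ℂ)
    (hB : ∀ p : ℝ, p ∈ Set.Icc (0:ℝ) 1 →
      ∀ c : ℂ, ((p : ℂ) • B₁ + ((1 - p : ℝ) : ℂ) • B₀).charpoly.IsRoot c →
        ‖c‖ ≤ 1)
    (x y : Fin m → ℂ)
    (hbound : ∀ z : ℝ, z ∈ Set.Ioo (0:ℝ) 1 → ∀ p : ℝ, p ∈ Set.Ioo (0:ℝ) 1 →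
      ‖star x ⬝ᵥ (((z : ℂ) • ((1 : Matrix (Fin m) (Fin m) ℂ) -
          ((1 - z : ℝ) : ℂ) • ((p : ℂ) • B₁ + ((1 - p : ℝ) : ℂ) • B₀))⁻¹).mulVec y)‖
        ≤ 1) :
    ∃ Q R : Polynomial ℂ, Q.natDegree ≤ m ∧ R.natDegree ≤ m ∧ R ≠ 0 ∧
      ∀ p : ℝ, p ∈ Set.Ioo (0:ℝ) 1 → R.eval (p : ℂ) ≠ 0 →
        Tendsto
          (fun z : ℝ => star x ⬝ᵥ (((z : ℂ) • ((1 : Matrix (Fin m) (Fin m) ℂ) -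
            ((1 - z : ℝ) : ℂ) • ((p : ℂ) • B₁ + ((1 - p : ℝ) : ℂ) • B₀))⁻¹).mulVec y))
          (nhdsWithin 0 (Set.Ioi 0))
          (nhds (Q.eval (p : ℂ) / R.eval (p : ℂ))) := by
  obtain ⟨d, hd⟩ := det_aux B₀ B₁ 0
  obtain ⟨e, he⟩ := det_aux B₀ B₁ (vecMulVec y (star x))
  simp only [add_zero] at hd
  have hex : ∃ n, ∃ i ∈ Finset.range (m + 1), (d i).coeff n ≠ 0 := by
    by_contra! hcon
    have h1 := hd 1 0
    rw [Finset.sum_eq_zero] at h1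
    · simp at h1
    · intro i hi
      have : d i = 0 := by ext n; simpa using hcon n i hi
      simp [this]
  classical
  set k := Nat.find hex with hkdef
  have hk := Nat.find_spec hex
  have hmin : ∀ j < k, ∀ i ∈ Finset.range (m + 1), (d i).coeff j = 0 := by
    intro j hj
    have := Nat.find_min hex hj
    push Not at this
    exact this
  rw [← hkdef] at hk
  have hcoef : ∀ c : ℕ → ℂ, (∑ i ∈ Finset.range (m + 1), C (c i) * X ^ i : ℂ[X]).natDegree ≤ m := by
    intro c
    apply Polynomial.natDegree_sum_le_of_forall_le
    intro i hi
    rw [Finset.mem_range] at hi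
    exact (natDegree_C_mul_X_pow_le _ _).trans (by omega)
  let N : ℕ → ℂ[X] := fun i => X * (e i - d i)
  refine ⟨∑ i ∈ Finset.range (m + 1), C ((N i).coeff k) * X ^ i,
    ∑ i ∈ Finset.range (m + 1), C ((d i).coeff k) * X ^ i, hcoef _, hcoef _, ?_, ?_⟩
  · obtain ⟨i, hi, hne⟩ := hk
    intro h0
    apply hne
    have := congrArg (fun q => q.coeff i) h0
    simp only [finsetSum_coeff, coeff_C_mul_X_pow, coeff_zero] at this
    rw [Finset.sum_eq_single i] at this
    · simpa using this
    · intro b _ hb; simp [hb.symm]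
    · intro h; exact absurd hi h
  intro p hp hR
  have hev : ∀ c : ℕ → ℂ[X], (∑ i ∈ Finset.range (m + 1), C ((c i).coeff k) * X ^ i : ℂ[X]).eval (p:ℂ)
      = (∑ i ∈ Finset.range (m + 1), c i * C ((p:ℂ) ^ i)).coeff k := by
    intro c
    simp only [eval_finsetSum, finsetSum_coeff, coeff_mul_C, eval_mul, eval_C, eval_pow, eval_X]
  rw [hev] at hR
  rw [hev, hev]
  apply lim_aux _ _ k _ hR _ (fun z hz => hbound z hz p hp)
  · intro z hz
    have hDz : (∑ i ∈ Finset.range (m + 1), d i * C ((p:ℂ) ^ i)).eval (z:ℂ) =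
        ((1 : Matrix (Fin m) (Fin m) ℂ) -
            ((1 - z : ℝ) : ℂ) • ((p : ℂ) • B₁ + ((1 - p : ℝ) : ℂ) • B₀)).det := by
      push_cast
      rw [hd]
      simp only [eval_finsetSum, eval_mul, eval_C]
    have hNz : (∑ i ∈ Finset.range (m + 1), N i * C ((p:ℂ) ^ i)).eval (z:ℂ) =
        z * (((1 : Matrix (Fin m) (Fin m) ℂ) -
            ((1 - z : ℝ) : ℂ) • ((p : ℂ) • B₁ + ((1 - p : ℝ) : ℂ) • B₀) + vecMulVec y (star x)).det
          - ((1 : Matrix (Fin m) (Fin m) ℂ) -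
            ((1 - z : ℝ) : ℂ) • ((p : ℂ) • B₁ + ((1 - p : ℝ) : ℂ) • B₀)).det) := by
      push_cast
      rw [hd, he, ← Finset.sum_sub_distrib, Finset.mul_sum]
      simp only [N, eval_finsetSum, eval_mul, eval_C, eval_sub, eval_X]
      apply Finset.sum_congr rfl
      intros; ring
    rw [hDz] at hz
    rw [hDz, hNz, smul_mulVec, dotProduct_smul, rank_one_aux _ hz, smul_eq_mul, mul_div_assoc]
  · intro j hj
    simp only [finsetSum_coeff, coeff_mul_C]
    apply Finset.sum_eq_zero
    intro i hi
    rw [hmin j hj i hi, zero_mul]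
end

section
/- (Continuity of the limiting acceptance probability, Lemma 4.2.) Fix S ≥ 1, a basis index a, and let Γ = e_a e_a† be the projector onto the accept basis state. For b ∈ {0,1}, let F_b(ρ) = Σ_j F_j^{(b)} ρ (F_j^{(b)})† be a superoperator on S×S complex matrices given by a finite Kraus family with Σ_j (F_j^{(b)})† F_j^{(b)} = I, and define the coin-outcome superoperators ℰ_b(ρ) := Γ ρ Γ + F_b((I−Γ) ρ (I−Γ)), which incorporate a measurement of the accept state at each step. For p ∈ [0,1], let ℰ_p := p·ℰ₁ + (1−p)·ℰ₀. Fix a density matrix ρ₀ and define a(p) := lim_{t→∞} ⟨e_a, ℰ_p^t(ρ₀) e_a⟩ (this limit exists because the accept entry ⟨e_a, ℰ_p^t(ρ₀) e_a⟩ is nondecreasing in t and bounded by 1). Then the function a(p) is continuous on the open interval (0,1). -/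
open Matrix Filter
open scoped ComplexOrder

/-- One step of the advice-coin quantum machine with coin bias `p`: with
probability `p` apply the heads superoperator `ℰ₁`, with probability `1-p`
the tails superoperator `ℰ₀`, where `ℰ_b(ρ) = Γ ρ Γ + F_b((I-Γ) ρ (I-Γ))`
incorporates a measurement of the accept basis state `idx`
(`Γ = e_idx e_idx†` is the accept projector). -/
noncomputable def coinStep {S r₀ r₁ : ℕ} (idx : Fin S)
    (F₀ : Fin r₀ → Matrix (Fin S) (Fin S) ℂ)
    (F₁ : Fin r₁ → Matrix (Fin S) (Fin S) ℂ)
    (p : ℝ) (ρ : Matrix (Fin S) (Fin S) ℂ) : Matrix (Fin S) (Fin S) ℂ :=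
  let Γ : Matrix (Fin S) (Fin S) ℂ := Matrix.single idx idx 1
  (p : ℂ) • (Γ * ρ * Γ + ∑ j, F₁ j * ((1 - Γ) * ρ * (1 - Γ)) * (F₁ j)ᴴ) +
    ((1 - p : ℝ) : ℂ) • (Γ * ρ * Γ + ∑ j, F₀ j * ((1 - Γ) * ρ * (1 - Γ)) * (F₀ j)ᴴ)

section aux
variable {n ι : Type*} [Fintype n] [DecidableEq n] [Fintype ι]

noncomputable def qE (K : ι → Matrix n n ℂ) (c : ι → ℝ) (ρ : Matrix n n ℂ) : Matrix n n ℂ :=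
  ∑ k, (c k : ℂ) • (K k * ρ * (K k)ᴴ)

lemma qE_psd (K : ι → Matrix n n ℂ) (c : ι → ℝ) (hc : ∀ k, 0 ≤ c k) {ρ : Matrix n n ℂ}
    (h : ρ.PosSemidef) : (qE K c ρ).PosSemidef := by
  unfold qE
  refine Matrix.posSemidef_sum _ fun k _ => ?_
  exact (h.mul_mul_conjTranspose_same (K k)).smul (by exact_mod_cast hc k)

lemma qE_trace (K : ι → Matrix n n ℂ) (c : ι → ℝ) (h1 : ∑ k, (c k : ℂ) • ((K k)ᴴ * K k) = 1)
    (ρ : Matrix n n ℂ) : (qE K c ρ).trace = ρ.trace := by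
  have : ρ.trace = ((∑ k, (c k : ℂ) • ((K k)ᴴ * K k)) * ρ).trace := by rw [h1, one_mul]
  rw [this, qE, Matrix.sum_mul, Matrix.trace_sum, Matrix.trace_sum]
  refine Finset.sum_congr rfl fun k _ => ?_
  rw [Matrix.smul_mul, Matrix.trace_smul, Matrix.trace_smul, Matrix.trace_mul_comm, Matrix.mul_assoc]

lemma conj_qE (K : ι → Matrix n n ℂ) (c : ι → ℝ) (X ρ : Matrix n n ℂ) :
    X * qE K c ρ * Xᴴ = qE (fun k => X * K k) c ρ := by
  simp only [qE, Matrix.mul_sum, Matrix.sum_mul, Matrix.mul_smul, Matrix.smul_mul,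
    Matrix.conjTranspose_mul, Matrix.mul_assoc]

lemma qE_conj (K : ι → Matrix n n ℂ) (c : ι → ℝ) (X ρ : Matrix n n ℂ) :
    qE K c (X * ρ * Xᴴ) = qE (fun k => K k * X) c ρ := by
  simp only [qE, Matrix.conjTranspose_mul, Matrix.mul_assoc]

lemma psd_fac {ρ : Matrix n n ℂ} (h : ρ.PosSemidef) : ∃ B, ρ = Bᴴ * B := by
  open scoped MatrixOrder Matrix.Norms.L2Operator in
  obtain ⟨B, hB⟩ := CStarAlgebra.nonneg_iff_eq_star_mul_self.1 h.nonneg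
  exact ⟨B, hB⟩

lemma psd_zero {ρ X : Matrix n n ℂ} (h : ρ.PosSemidef) (h0 : X * ρ * Xᴴ = 0) : ρ * Xᴴ = 0 := by
  obtain ⟨B, rfl⟩ := psd_fac h
  have : (B * Xᴴ)ᴴ * (B * Xᴴ) = 0 := by
    rw [← h0]; simp [Matrix.mul_assoc]
  rw [Matrix.conjTranspose_mul_self_eq_zero] at this
  rw [Matrix.mul_assoc, this, Matrix.mul_zero]

lemma qE_zero (K : ι → Matrix n n ℂ) (c : ι → ℝ) (hc : ∀ k, 0 < c k) {ρ : Matrix n n ℂ}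
    (h : ρ.PosSemidef) (h0 : (qE K c ρ).trace = 0) (k : ι) : ρ * (K k)ᴴ = 0 := by
  unfold qE at h0
  rw [Matrix.trace_sum] at h0
  have hp : ∀ k, ((c k : ℂ) • (K k * ρ * (K k)ᴴ)).PosSemidef := fun k =>
    (h.mul_mul_conjTranspose_same (K k)).smul (by exact_mod_cast (hc k).le)
  have := (Finset.sum_eq_zero_iff_of_nonneg (fun k _ => (hp k).trace_nonneg)).1 h0 k (Finset.mem_univ _)
  rw [(hp k).trace_eq_zero_iff] at this
  refine psd_zero h ?_
  refine (smul_eq_zero.1 this).resolve_left ?_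
  exact_mod_cast (hc k).ne'

structure IsPr (K : ι → Matrix n n ℂ) (P : Matrix n n ℂ) : Prop where
  sq : P * P = P
  sa : Pᴴ = P
  inv : ∀ k, K k * P = P * K k * P

lemma IsPr.comp_sq {K : ι → Matrix n n ℂ} {P : Matrix n n ℂ} (h : IsPr K P) :
    (1 - P) * (1 - P) = 1 - P := by
  have := h.sq
  rw [Matrix.sub_mul, Matrix.mul_sub, Matrix.mul_sub, this]; simp

lemma IsPr.comp_sa {K : ι → Matrix n n ℂ} {P : Matrix n n ℂ} (h : IsPr K P) :
    (1 - P)ᴴ = 1 - P := by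
  simp [h.sa]

lemma IsPr.comp_inv {K : ι → Matrix n n ℂ} {P : Matrix n n ℂ} (h : IsPr K P) (k : ι) :
    (1 - P) * K k * (1 - P) = (1 - P) * K k := by
  have : (1 - P) * K k * P = 0 := by
    rw [Matrix.sub_mul, Matrix.sub_mul, Matrix.one_mul, h.inv, sub_self]
  rw [Matrix.mul_sub, this, Matrix.mul_one, sub_zero]

lemma trace_pr {P ρ : Matrix n n ℂ} (h : P * P = P) : (P * ρ * P).trace = (P * ρ).trace := by
  rw [Matrix.trace_mul_comm, ← Matrix.mul_assoc, h]

lemma trace_pr_nonneg {P ρ : Matrix n n ℂ} (h : P * P = P) (h' : Pᴴ = P) (hρ : ρ.PosSemidef) :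
    0 ≤ (P * ρ).trace := by
  rw [← trace_pr h]
  have := (hρ.mul_mul_conjTranspose_same P).trace_nonneg
  rwa [h'] at this

lemma IsPr.key {K : ι → Matrix n n ℂ} {P : Matrix n n ℂ} (h : IsPr K P) (c : ι → ℝ)
    (ρ : Matrix n n ℂ) :
    (1 - P) * qE K c ρ * (1 - P) =
      (1 - P) * qE K c ((1 - P) * ρ * (1 - P)) * (1 - P) := by
  have e := h.comp_sa
  have := conj_qE K c (1 - P) ρ
  rw [e] at this
  rw [this]
  have h2 := conj_qE K c (1 - P) ((1 - P) * ρ * (1 - P))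
  have h3 := qE_conj (fun k => (1 - P) * K k) c (1 - P) ρ
  rw [e] at h2 h3
  rw [h2, h3]
  simp only [h.comp_inv]

lemma IsPr.mono {K : ι → Matrix n n ℂ} {P : Matrix n n ℂ} (h : IsPr K P) (c : ι → ℝ)
    (hc : ∀ k, 0 ≤ c k) (h1 : ∑ k, (c k : ℂ) • ((K k)ᴴ * K k) = 1)
    {ρ : Matrix n n ℂ} (hρ : ρ.PosSemidef) :
    (P * ρ).trace ≤ (P * qE K c ρ).trace := by
  have e := h.comp_sa
  have hs : ((1 - P) * ρ * (1 - P)).PosSemidef := by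
    have := hρ.mul_mul_conjTranspose_same (1 - P)
    rwa [e] at this
  have hk := congrArg Matrix.trace (h.key c ρ)
  rw [trace_pr h.comp_sq, trace_pr h.comp_sq, Matrix.sub_mul, Matrix.sub_mul, Matrix.one_mul,
    Matrix.one_mul, Matrix.trace_sub, Matrix.trace_sub, qE_trace _ _ h1, qE_trace _ _ h1,
    trace_pr h.comp_sq, Matrix.sub_mul, Matrix.one_mul, Matrix.trace_sub] at hk
  have hn := trace_pr_nonneg h.sq h.sa (qE_psd K c hc hs)
  rw [Matrix.sub_mul, Matrix.one_mul] at hn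
  have : (P * qE K c ρ).trace = (P * ρ).trace + (P * qE K c ((ρ - P * ρ) * (1 - P))).trace := by
    linear_combination -hk
  rw [this]
  exact le_add_of_nonneg_right hn

/-- projection onto a subspace -/
lemma exists_proj {m : ℕ} (R : Submodule ℂ (Fin m → ℂ)) : ∃ P : Matrix (Fin m) (Fin m) ℂ,
    P * P = P ∧ Pᴴ = P ∧ (∀ v, P *ᵥ v ∈ R) ∧ ∀ v ∈ R, P *ᵥ v = v := by
  let R' : Submodule ℂ (EuclideanSpace ℂ (Fin m)) :=
    R.comap (WithLp.linearEquiv 2 ℂ (Fin m → ℂ)).toLinearMap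
  let T := Matrix.toEuclideanCLM (n := Fin m) (𝕜 := ℂ)
  have hT : ∀ v, WithLp.ofLp (R'.starProjection (WithLp.toLp 2 v)) = (T.symm R'.starProjection) *ᵥ v := by
    intro v
    have := Matrix.ofLp_toEuclideanCLM (𝕜 := ℂ) (T.symm R'.starProjection) (WithLp.toLp 2 v)
    rw [← this]
    congr 2
    exact (T.apply_symm_apply _).symm
  refine ⟨T.symm R'.starProjection, ?_, ?_, ?_, ?_⟩
  · rw [← map_mul, R'.isIdempotentElem_starProjection.eq]
  · rw [← Matrix.star_eq_conjTranspose]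
    apply T.injective
    have h := T.map_star' (T.symm R'.starProjection)
    have h2 : T (T.symm R'.starProjection) = R'.starProjection := T.apply_symm_apply _
    refine h.trans ?_
    change star (T (T.symm R'.starProjection)) = _
    rw [h2, (isSelfAdjoint_starProjection R').star_eq]
    exact h2.symm
  · intro v
    rw [← hT]
    exact R'.starProjection_apply_mem (WithLp.toLp 2 v)
  · intro v hv
    rw [← hT]
    have : WithLp.toLp 2 v ∈ R' := hv
    rw [Submodule.starProjection_eq_self_iff.2 this]

lemma exists_rej {m : ℕ} (K : ι → Matrix (Fin m) (Fin m) ℂ) (G : Matrix (Fin m) (Fin m) ℂ) :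
    ∃ P, IsPr K P ∧ G * P = 0 ∧
      ∀ X, (∀ w : List ι, G * (w.map K).prod * X = 0) → P * X = X := by
  let R : Submodule ℂ (Fin m → ℂ) := ⨅ w : List ι, LinearMap.ker (G * (w.map K).prod).mulVecLin
  have hR : ∀ v, v ∈ R ↔ ∀ w : List ι, (G * (w.map K).prod) *ᵥ v = 0 := by
    intro v; simp [R, Submodule.mem_iInf]
  obtain ⟨P, p1, p2, p3, p4⟩ := exists_proj R
  have hX : ∀ X, (∀ w : List ι, G * (w.map K).prod * X = 0) → P * X = X := by
    intro X h
    refine Matrix.ext_iff_mulVec.2 fun v => ?_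
    rw [← Matrix.mulVec_mulVec]
    apply p4
    rw [hR]
    intro w
    rw [Matrix.mulVec_mulVec, h, Matrix.zero_mulVec]
  have hP : ∀ w : List ι, G * (w.map K).prod * P = 0 := by
    intro w
    refine Matrix.ext_iff_mulVec.2 fun v => ?_
    rw [← Matrix.mulVec_mulVec, (hR _).1 (p3 v), Matrix.zero_mulVec]
  refine ⟨P, ⟨p1, p2, fun k => ?_⟩, ?_, hX⟩
  · rw [Matrix.mul_assoc, hX]
    intro w
    have := hP (w ++ [k])
    simpa [Matrix.mul_assoc] using this
  · simpa using hP []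

lemma fixed_zero {m : ℕ} {K : ι → Matrix (Fin m) (Fin m) ℂ} {G P : Matrix (Fin m) (Fin m) ℂ}
    (hG : IsPr K G) (hP : IsPr K P) (hGP : G * P = 0)
    (hX : ∀ X, (∀ w : List ι, G * (w.map K).prod * X = 0) → P * X = X)
    (c : ι → ℝ) (hc : ∀ k, 0 < c k) (h1 : ∑ k, (c k : ℂ) • ((K k)ᴴ * K k) = 1)
    {σ : Matrix (Fin m) (Fin m) ℂ} (hσ : σ.PosSemidef) (hfix : qE K c σ = σ) :
    ((1 - G - P) * σ).trace = 0 := by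
  obtain ⟨M, hM⟩ : ∃ M, M = 1 - G := ⟨_, rfl⟩
  have e : Mᴴ = M := by rw [hM]; exact hG.comp_sa
  have msq : M * M = M := by rw [hM]; exact hG.comp_sq
  obtain ⟨τ, hτ⟩ : ∃ τ, τ = M * σ * M := ⟨_, rfl⟩
  have tp : τ.PosSemidef := by
    have := hσ.mul_mul_conjTranspose_same M
    rwa [e, ← hτ] at this
  have t1 : τ = M * qE K c τ * M := by
    have := hG.key c σ
    rw [hfix, ← hM, ← hτ] at this
    exact this
  have hMG : G + M = 1 := by rw [hM]; abel
  have t2 : (qE (fun k => G * K k) c τ).trace = 0 := by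
    rw [← conj_qE, hG.sa, trace_pr hG.sq]
    have h2 := congrArg Matrix.trace t1
    rw [trace_pr msq, hM, Matrix.sub_mul, Matrix.trace_sub, Matrix.one_mul, qE_trace K c h1] at h2
    linear_combination h2
  have hGK : ∀ k, τ * ((K k)ᴴ * G) = 0 := by
    intro k
    have := qE_zero _ c hc tp t2 k
    rwa [Matrix.conjTranspose_mul, hG.sa] at this
  have hker : ∀ X, τ * X = 0 → ∀ k, τ * ((K k)ᴴ * X) = 0 := by
    intro X hX k
    have h3 : (qE (fun k => (Xᴴ * M) * K k) c τ).trace = 0 := by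
      rw [← conj_qE, Matrix.conjTranspose_mul, Matrix.conjTranspose_conjTranspose, e]
      have : Xᴴ * M * qE K c τ * (M * X) = Xᴴ * (M * qE K c τ * M) * X := by
        simp only [Matrix.mul_assoc]
      rw [this, ← t1, Matrix.mul_assoc, hX]; simp
    have h4 := qE_zero _ c hc tp h3 k
    simp only [Matrix.conjTranspose_mul, Matrix.conjTranspose_conjTranspose, e] at h4
    calc τ * ((K k)ᴴ * X) = τ * ((K k)ᴴ * ((G + M) * X)) := by rw [hMG, Matrix.one_mul]
      _ = τ * ((K k)ᴴ * G) * X + τ * ((K k)ᴴ * (M * X)) := by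
        simp only [Matrix.add_mul, Matrix.mul_add, Matrix.mul_assoc]
      _ = 0 := by rw [hGK, h4]; simp
  have hw : ∀ (w : List ι) X, τ * X = 0 → τ * ((w.map K).prodᴴ * X) = 0 := by
    intro w
    induction w with
    | nil => intro X h; simpa using h
    | cons k w ih =>
      intro X h
      have := ih _ (hker X h k)
      simpa [Matrix.conjTranspose_mul, Matrix.mul_assoc] using this
  have hMG0 : M * G = 0 := by rw [hM, Matrix.sub_mul, hG.sq]; simp
  have tG : τ * G = 0 := by rw [hτ, Matrix.mul_assoc, hMG0, Matrix.mul_zero]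
  have hPt : P * τ = τ := by
    apply hX
    intro w
    have := congrArg Matrix.conjTranspose (hw w G tG)
    simpa [Matrix.conjTranspose_mul, hG.sa, tp.1.eq, Matrix.mul_assoc] using this
  have hPG : P * G = 0 := by
    have := congrArg Matrix.conjTranspose hGP
    simpa [Matrix.conjTranspose_mul, hG.sa, hP.sa] using this
  have hPM : P * M = P := by rw [hM, Matrix.mul_sub, hPG]; simp
  have hMt : M * τ = τ := by rw [hτ, ← Matrix.mul_assoc, ← Matrix.mul_assoc, msq]
  have a1 : (M * σ).trace = τ.trace := by rw [hτ, trace_pr msq]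
  have a2 : (P * σ).trace = (P * τ).trace := by
    have hMP : M * P = P := by rw [hM, Matrix.sub_mul, hGP]; simp
    calc (P * σ).trace = (M * P * M * σ).trace := by rw [hMP, hPM]
      _ = (M * (P * M * σ)).trace := by simp only [Matrix.mul_assoc]
      _ = (P * M * σ * M).trace := Matrix.trace_mul_comm _ _
      _ = _ := by rw [hτ]; simp only [Matrix.mul_assoc]
  rw [← hM, Matrix.sub_mul, Matrix.trace_sub, a1, a2, hPt, sub_self]

lemma dens_entry {ρ : Matrix n n ℂ} (h : ρ.PosSemidef) (ht : ρ.trace = 1) (i j : n) :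
    ‖ρ i j‖ ≤ 1 := by
  obtain ⟨B, rfl⟩ := psd_fac h
  have hd : ∀ i, (((Bᴴ * B) i i).re) = ∑ k, ‖B k i‖ ^ 2 := by
    intro i
    simp [Matrix.mul_apply, Complex.sq_norm, Complex.normSq_apply]
  have hle : ∀ i, ∑ k, ‖B k i‖ ^ 2 ≤ 1 := by
    intro i
    have : ∑ i, ∑ k, ‖B k i‖ ^ 2 = 1 := by
      have := congrArg Complex.re ht
      simp only [Matrix.trace, Matrix.diag, Complex.re_sum, hd] at this
      simpa using this
    rw [← this]
    exact Finset.single_le_sum (f := fun i => ∑ k, ‖B k i‖ ^ 2)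
      (fun i _ => Finset.sum_nonneg fun k _ => by positivity) (Finset.mem_univ i)
  calc ‖(Bᴴ * B) i j‖ ≤ ∑ k, ‖B k i‖ * ‖B k j‖ := by
        rw [Matrix.mul_apply]
        refine (norm_sum_le _ _).trans (Finset.sum_le_sum fun k _ => ?_)
        simp
    _ ≤ ∑ k, (‖B k i‖ ^ 2 + ‖B k j‖ ^ 2) / 2 :=
        Finset.sum_le_sum fun k _ => by nlinarith [sq_nonneg (‖B k i‖ - ‖B k j‖)]
    _ = (∑ k, ‖B k i‖ ^ 2 + ∑ k, ‖B k j‖ ^ 2) / 2 := by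
        rw [← Finset.sum_div, Finset.sum_add_distrib]
    _ ≤ 1 := by linarith [hle i, hle j]

lemma dens_compact : IsCompact {ρ : Matrix n n ℂ | ρ.PosSemidef ∧ ρ.trace = 1} := by
  have hc : IsCompact (Set.pi Set.univ fun _ : n => Set.pi Set.univ fun _ : n =>
      Metric.closedBall (0 : ℂ) 1) :=
    isCompact_univ_pi fun _ => isCompact_univ_pi fun _ => isCompact_closedBall _ _
  refine hc.of_isClosed_subset ?_ ?_
  · have h1 : IsClosed {ρ : Matrix n n ℂ | ρ.trace = 1} :=
      isClosed_eq (by fun_prop) continuous_const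
    have h2 : IsClosed {ρ : Matrix n n ℂ | ρ.PosSemidef} := by
      have : {ρ : Matrix n n ℂ | ρ.PosSemidef} =
        {ρ : Matrix n n ℂ | ρᴴ = ρ} ∩ ⋂ x : n → ℂ, {ρ | 0 ≤ star x ⬝ᵥ (ρ *ᵥ x)} := by
        ext ρ
        simp [Matrix.posSemidef_iff_dotProduct_mulVec, Matrix.IsHermitian]
      rw [this]
      refine (isClosed_eq (by fun_prop) (by fun_prop)).inter (isClosed_iInter fun x => ?_)
      exact isClosed_le continuous_const (by fun_prop)
    exact h2.inter h1
  · rintro ρ ⟨h, ht⟩ i - j -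
    rw [mem_closedBall_zero_iff]
    exact dens_entry h ht i j

end aux
section aux2
variable {ι : Type*} [Fintype ι] {m : ℕ}

noncomputable def qL (K : ι → Matrix (Fin m) (Fin m) ℂ) (c : ι → ℝ) :
    Matrix (Fin m) (Fin m) ℂ →ₗ[ℂ] Matrix (Fin m) (Fin m) ℂ where
  toFun := qE K c
  map_add' := by
    intro x y
    simp [qE, Matrix.mul_add, Matrix.add_mul, Finset.sum_add_distrib]
  map_smul' := by
    intro a x
    simp only [qE, Matrix.mul_smul, Matrix.smul_mul, Finset.smul_sum, RingHom.id_apply]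
    exact Finset.sum_congr rfl fun k _ => smul_comm _ _ _

lemma iter_dens (K : ι → Matrix (Fin m) (Fin m) ℂ) (c : ι → ℝ) (hc : ∀ k, 0 ≤ c k)
    (h1 : ∑ k, (c k : ℂ) • ((K k)ᴴ * K k) = 1) {ρ : Matrix (Fin m) (Fin m) ℂ}
    (hρ : ρ.PosSemidef ∧ ρ.trace = 1) (t : ℕ) :
    ((qE K c)^[t] ρ).PosSemidef ∧ ((qE K c)^[t] ρ).trace = 1 := by
  induction t with
  | zero => simpa using hρ
  | succ t ih =>
    rw [Function.iterate_succ_apply']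
    exact ⟨qE_psd K c hc ih.1, (qE_trace K c h1 _).trans ih.2⟩

lemma IsPr.monotone {K : ι → Matrix (Fin m) (Fin m) ℂ} {P : Matrix (Fin m) (Fin m) ℂ}
    (h : IsPr K P) (c : ι → ℝ) (hc : ∀ k, 0 ≤ c k)
    (h1 : ∑ k, (c k : ℂ) • ((K k)ᴴ * K k) = 1) {ρ : Matrix (Fin m) (Fin m) ℂ}
    (hρ : ρ.PosSemidef ∧ ρ.trace = 1) :
    Monotone fun t : ℕ => (P * (qE K c)^[t] ρ).trace.re := by
  refine monotone_nat_of_le_succ fun t => ?_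
  rw [Function.iterate_succ_apply']
  exact (Complex.le_def.1 (h.mono c hc h1 (iter_dens K c hc h1 hρ t).1)).1

lemma IsPr.le_one {K : ι → Matrix (Fin m) (Fin m) ℂ} {P : Matrix (Fin m) (Fin m) ℂ}
    (h : IsPr K P) {ρ : Matrix (Fin m) (Fin m) ℂ}
    (hρ : ρ.PosSemidef ∧ ρ.trace = 1) : (P * ρ).trace.re ≤ 1 := by
  have := trace_pr_nonneg h.comp_sq h.comp_sa hρ.1
  rw [Matrix.sub_mul, Matrix.one_mul, Matrix.trace_sub, hρ.2] at this
  have := (Complex.le_def.1 this).1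
  simpa using this

lemma tends_one {K : ι → Matrix (Fin m) (Fin m) ℂ} {G P : Matrix (Fin m) (Fin m) ℂ}
    (hG : IsPr K G) (hP : IsPr K P) (hGP : G * P = 0)
    (hX : ∀ X, (∀ w : List ι, G * (w.map K).prod * X = 0) → P * X = X)
    (c : ι → ℝ) (hc : ∀ k, 0 < c k) (h1 : ∑ k, (c k : ℂ) • ((K k)ᴴ * K k) = 1)
    {ρ : Matrix (Fin m) (Fin m) ℂ} (hρ : ρ.PosSemidef ∧ ρ.trace = 1) :
    Tendsto (fun t : ℕ => ((G + P) * (qE K c)^[t] ρ).trace.re) atTop (nhds 1) := by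
  have hPG : P * G = 0 := by
    have := congrArg Matrix.conjTranspose hGP
    simpa [Matrix.conjTranspose_mul, hG.sa, hP.sa] using this
  have hQ : IsPr K (G + P) := by
    refine ⟨?_, ?_, fun k => ?_⟩
    · simp [Matrix.add_mul, Matrix.mul_add, hG.sq, hP.sq, hGP, hPG]
    · simp [hG.sa, hP.sa]
    · have a : (G + P) * (K k * G) = K k * G := by
        rw [hG.inv k, ← Matrix.mul_assoc, ← Matrix.mul_assoc, Matrix.add_mul, hG.sq, hPG, add_zero]
      have b : (G + P) * (K k * P) = K k * P := by
        rw [hP.inv k, ← Matrix.mul_assoc, ← Matrix.mul_assoc, Matrix.add_mul, hP.sq, hGP, zero_add]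
      rw [Matrix.mul_assoc, Matrix.mul_add, Matrix.mul_add, a, b]
  have hc' : ∀ k, 0 ≤ c k := fun k => (hc k).le
  have hd := iter_dens K c hc' h1 hρ
  have hmono := hQ.monotone c hc' h1 hρ
  have hb : BddAbove (Set.range fun t : ℕ => ((G + P) * (qE K c)^[t] ρ).trace.re) :=
    ⟨1, by rintro _ ⟨t, rfl⟩; exact hQ.le_one (hd t)⟩
  have hlim := tendsto_atTop_ciSup hmono hb
  set l := ⨆ t : ℕ, ((G + P) * (qE K c)^[t] ρ).trace.re with hl
  have hle : ∀ t : ℕ, ((G + P) * (qE K c)^[t] ρ).trace.re ≤ l := fun t => le_ciSup hb t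
  have hl1 : l ≤ 1 := ciSup_le fun t => hQ.le_one (hd t)
  suffices 1 ≤ l by rwa [le_antisymm hl1 this] at hlim
  let s : ℕ → Matrix (Fin m) (Fin m) ℂ := fun N =>
    (((N + 1 : ℝ)⁻¹ : ℝ) : ℂ) • ∑ t ∈ Finset.range (N + 1), (qE K c)^[t] ρ
  have hpos : ∀ N : ℕ, (0 : ℝ) < (N + 1 : ℝ)⁻¹ := fun N => by positivity
  have hs : ∀ N, s N ∈ {ρ : Matrix (Fin m) (Fin m) ℂ | ρ.PosSemidef ∧ ρ.trace = 1} := by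
    intro N
    refine ⟨(Matrix.posSemidef_sum _ fun t _ => (hd t).1).smul (by exact_mod_cast (hpos N).le), ?_⟩
    simp only [s, Matrix.trace_smul, Matrix.trace_sum, (hd _).2]
    have : ((N : ℂ) + 1) ≠ 0 := by exact_mod_cast Nat.succ_ne_zero N
    simp [this]
  have hsl : ∀ N, ((G + P) * s N).trace.re ≤ l := by
    intro N
    simp only [s, Matrix.mul_smul, Matrix.mul_sum, Matrix.trace_smul, Matrix.trace_sum, smul_eq_mul,
      Complex.re_ofReal_mul, Complex.re_sum]
    have : ∑ t ∈ Finset.range (N + 1), ((G + P) * (qE K c)^[t] ρ).trace.re ≤ (N + 1) * l := by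
      refine (Finset.sum_le_card_nsmul _ _ l fun t _ => hle t).trans ?_
      simp
    calc _ ≤ (N + 1 : ℝ)⁻¹ * ((N + 1) * l) := by
          exact mul_le_mul_of_nonneg_left this (hpos N).le
      _ = l := by field_simp
  have hsf : ∀ N, qE K c (s N) = s N + (((N + 1 : ℝ)⁻¹ : ℝ) : ℂ) • ((qE K c)^[N + 1] ρ - ρ) := by
    intro N
    change qL K c (s N) = _
    simp only [s, map_smul, map_sum]
    rw [← smul_add]
    congr 1
    have e1 : ∀ t, qL K c ((qE K c)^[t] ρ) = (qE K c)^[t + 1] ρ := fun t => by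
      rw [Function.iterate_succ_apply']; rfl
    simp only [e1]
    have e2 := Finset.sum_range_succ' (fun t => (qE K c)^[t] ρ) (N + 1)
    rw [Finset.sum_range_succ] at e2
    simp only [Function.iterate_zero, id] at e2
    rw [add_sub, e2, add_sub_cancel_right]
  have hz : Tendsto (fun N : ℕ => (((N + 1 : ℝ)⁻¹ : ℝ) : ℂ) • ((qE K c)^[N + 1] ρ - ρ)) atTop
      (nhds 0) := by
    refine tendsto_pi_nhds.2 fun i => tendsto_pi_nhds.2 fun j => ?_
    refine squeeze_zero_norm (a := fun N : ℕ => 2 * (1 / ((N : ℝ) + 1))) (fun N => ?_) ?_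
    · have b1 := dens_entry (hd (N + 1)).1 (hd (N + 1)).2 i j
      have b2 := dens_entry hρ.1 hρ.2 i j
      have b3 := norm_sub_le (((qE K c)^[N + 1] ρ) i j) (ρ i j)
      rw [Matrix.smul_apply, Matrix.sub_apply, norm_smul, Complex.norm_real, Real.norm_eq_abs,
        abs_of_pos (hpos N), one_div, mul_comm]
      exact mul_le_mul_of_nonneg_right (by linarith) (hpos N).le
    · simpa using (tendsto_one_div_add_atTop_nhds_zero_nat (𝕜 := ℝ)).const_mul 2
  have : FirstCountableTopology (Matrix (Fin m) (Fin m) ℂ) :=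
    inferInstanceAs (FirstCountableTopology (Fin m → Fin m → ℂ))
  obtain ⟨σ, hσ, φ, hφ, hsσ⟩ := dens_compact.tendsto_subseq hs
  have hcont : Continuous (qE K c) := by unfold qE; fun_prop
  have hfix : qE K c σ = σ := by
    have l1 := (hcont.tendsto σ).comp hsσ
    have l2 := hsσ.add (hz.comp hφ.tendsto_atTop)
    rw [add_zero] at l2
    refine tendsto_nhds_unique l1 (l2.congr fun N => ?_)
    exact (hsf (φ N)).symm
  have h0 := fixed_zero hG hP hGP hX c hc h1 hσ.1 hfix
  have hcq : Continuous fun ρ : Matrix (Fin m) (Fin m) ℂ => ((G + P) * ρ).trace.re :=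
    Complex.continuous_re.comp (by fun_prop)
  have h2 : ((G + P) * σ).trace.re ≤ l :=
    le_of_tendsto ((hcq.tendsto σ).comp hsσ) (Eventually.of_forall fun N => hsl (φ N))
  rw [sub_sub, Matrix.sub_mul, Matrix.one_mul, Matrix.trace_sub, hσ.2] at h0
  rw [← sub_eq_zero.1 h0] at h2
  simpa using h2

end aux2

section conc
variable {S r₀ r₁ : ℕ}

noncomputable def kr (idx : Fin S) (F₀ : Fin r₀ → Matrix (Fin S) (Fin S) ℂ)
    (F₁ : Fin r₁ → Matrix (Fin S) (Fin S) ℂ) :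
    Option (Fin r₁ ⊕ Fin r₀) → Matrix (Fin S) (Fin S) ℂ
  | none => Matrix.single idx idx 1
  | some (Sum.inl j) => F₁ j * (1 - Matrix.single idx idx 1)
  | some (Sum.inr j) => F₀ j * (1 - Matrix.single idx idx 1)

def wt (r₀ r₁ : ℕ) (p : ℝ) : Option (Fin r₁ ⊕ Fin r₀) → ℝ
  | none => 1
  | some (Sum.inl _) => p
  | some (Sum.inr _) => 1 - p

lemma G_sa (idx : Fin S) : (Matrix.single idx idx (1 : ℂ))ᴴ = Matrix.single idx idx 1 := by
  simp

lemma G_sq (idx : Fin S) :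
    Matrix.single idx idx (1 : ℂ) * Matrix.single idx idx 1 = Matrix.single idx idx 1 := by
  simp

lemma coinStep_eq (idx : Fin S) (F₀ : Fin r₀ → Matrix (Fin S) (Fin S) ℂ)
    (F₁ : Fin r₁ → Matrix (Fin S) (Fin S) ℂ) (p : ℝ) :
    coinStep idx F₀ F₁ p = qE (kr idx F₀ F₁) (wt r₀ r₁ p) := by
  funext ρ
  have hsa := G_sa idx
  generalize hG : Matrix.single idx idx (1 : ℂ) = G at hsa
  have e : (1 - G)ᴴ = 1 - G := by simp [hsa]
  have hp : (p : ℂ) + ((1 - p : ℝ) : ℂ) = 1 := by push_cast; ring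
  simp only [coinStep, qE, Fintype.sum_option, Fintype.sum_sum_type, kr, wt, hG,
    Matrix.conjTranspose_mul, e, hsa, smul_add, Finset.smul_sum, Matrix.mul_assoc]
  rw [Complex.ofReal_one, ← hp, add_smul]
  abel

lemma kr_pr (idx : Fin S) (F₀ : Fin r₀ → Matrix (Fin S) (Fin S) ℂ)
    (F₁ : Fin r₁ → Matrix (Fin S) (Fin S) ℂ) :
    IsPr (kr idx F₀ F₁) (Matrix.single idx idx 1) := by
  have hsq := G_sq idx
  refine ⟨hsq, G_sa idx, ?_⟩
  generalize hG : Matrix.single idx idx (1 : ℂ) = G at hsq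
  have e : (1 - G) * G = 0 := by rw [Matrix.sub_mul, hsq]; simp
  rintro (_ | j | j)
  · simp only [kr, hG, hsq]
  · simp only [kr, hG, Matrix.mul_assoc, e, Matrix.mul_zero]
  · simp only [kr, hG, Matrix.mul_assoc, e, Matrix.mul_zero]

lemma kr_one (idx : Fin S) (F₀ : Fin r₀ → Matrix (Fin S) (Fin S) ℂ)
    (F₁ : Fin r₁ → Matrix (Fin S) (Fin S) ℂ)
    (hF₀ : ∑ j, (F₀ j)ᴴ * F₀ j = 1) (hF₁ : ∑ j, (F₁ j)ᴴ * F₁ j = 1) (p : ℝ) :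
    ∑ k, (wt r₀ r₁ p k : ℂ) • ((kr idx F₀ F₁ k)ᴴ * kr idx F₀ F₁ k) = 1 := by
  have hsa := G_sa idx
  have hsq := G_sq idx
  generalize hG : Matrix.single idx idx (1 : ℂ) = G at hsa hsq
  have e : (1 - G)ᴴ = 1 - G := by simp [hsa]
  have e2 : (1 - G) * (1 - G) = 1 - G := by
    rw [Matrix.sub_mul, Matrix.mul_sub, Matrix.mul_sub, hsq]; simp
  have hp : (p : ℂ) + ((1 - p : ℝ) : ℂ) = 1 := by push_cast; ring
  have hs : ∀ {r : ℕ} (F : Fin r → Matrix (Fin S) (Fin S) ℂ), ∑ j, (F j)ᴴ * F j = 1 →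
      ∑ j, (F j * (1 - G))ᴴ * (F j * (1 - G)) = 1 - G := by
    intro r F h
    calc _ = (1 - G) * (∑ j, (F j)ᴴ * F j) * (1 - G) := by
          simp only [Matrix.conjTranspose_mul, e, Matrix.mul_sum, Matrix.sum_mul, Matrix.mul_assoc]
      _ = _ := by rw [h, Matrix.mul_one, e2]
  simp only [Fintype.sum_option, Fintype.sum_sum_type, kr, wt, hG, ← Finset.smul_sum,
    hs F₀ hF₀, hs F₁ hF₁, hsa, hsq]
  rw [← add_smul, hp]
  simp

lemma G_tr (idx : Fin S) (ρ : Matrix (Fin S) (Fin S) ℂ) :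
    (Matrix.single idx idx 1 * ρ).trace = ρ idx idx := by
  simp [Matrix.trace_single_mul]

end conc

/-- Continuity of the limiting acceptance probability (Lemma 4.2): the limiting
accept-entry `a(p) = lim_t ⟨e_idx, ℰ_p^t(ρ₀) e_idx⟩` of the advice-coin quantum
machine is continuous in the coin bias `p` on the open interval `(0,1)`. -/
theorem limiting_acceptance_continuous {S r₀ r₁ : ℕ} (hS : 1 ≤ S) (idx : Fin S)
    (F₀ : Fin r₀ → Matrix (Fin S) (Fin S) ℂ)
    (F₁ : Fin r₁ → Matrix (Fin S) (Fin S) ℂ)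
    (hF₀ : ∑ j, (F₀ j)ᴴ * F₀ j = 1) (hF₁ : ∑ j, (F₁ j)ᴴ * F₁ j = 1)
    (ρ₀ : Matrix (Fin S) (Fin S) ℂ) (hρ₀ : ρ₀.PosSemidef ∧ ρ₀.trace = 1)
    (aFun : ℝ → ℂ)
    (haFun : ∀ p : ℝ, p ∈ Set.Icc (0:ℝ) 1 →
      Tendsto (fun t : ℕ => ((coinStep idx F₀ F₁ p)^[t] ρ₀) idx idx)
        atTop (nhds (aFun p))) :
    ContinuousOn aFun (Set.Ioo (0:ℝ) 1) := by
  have hG := kr_pr idx F₀ F₁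
  obtain ⟨P, hP, hGP, hX⟩ := exists_rej (kr idx F₀ F₁) (Matrix.single idx idx 1)
  have h1 := kr_one idx F₀ F₁ hF₀ hF₁
  have hw : ∀ p ∈ Set.Ioo (0:ℝ) 1, ∀ k, 0 < wt r₀ r₁ p k := by
    rintro p ⟨h0, h1⟩ (_ | j | j) <;> simp [wt, h0, h1]
  simp only [coinStep_eq] at haFun
  set E : ℝ → ℕ → Matrix (Fin S) (Fin S) ℂ := fun p t =>
    (qE (kr idx F₀ F₁) (wt r₀ r₁ p))^[t] ρ₀ with hE
  have hcont : ∀ t, Continuous fun p => E p t := by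
    intro t
    induction t with
    | zero => simpa [hE] using continuous_const
    | succ t ih =>
      simp only [hE, Function.iterate_succ_apply'] at ih ⊢
      unfold qE
      have : ∀ k, Continuous fun p => ((wt r₀ r₁ p k : ℝ) : ℂ) := by
        rintro (_ | j | j) <;> simp only [wt] <;> fun_prop
      refine continuous_finsetSum _ fun k _ => (this k).smul ?_
      exact (continuous_const.matrix_mul ih).matrix_mul continuous_const
  have hd : ∀ p ∈ Set.Ioo (0:ℝ) 1, ∀ t, (E p t).PosSemidef ∧ (E p t).trace = 1 :=
    fun p hp => iter_dens _ _ (fun k => (hw p hp k).le) (h1 p) hρ₀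
  have hre : ∀ p ∈ Set.Ioo (0:ℝ) 1,
      Tendsto (fun t => (Matrix.single idx idx 1 * E p t).trace.re) atTop (nhds (aFun p).re) := by
    intro p hp
    simp only [G_tr]
    exact (Complex.continuous_re.tendsto _).comp (haFun p ⟨hp.1.le, hp.2.le⟩)
  have him : ∀ p ∈ Set.Ioo (0:ℝ) 1, aFun p = (((aFun p).re : ℝ) : ℂ) := by
    intro p hp
    have hh := haFun p ⟨hp.1.le, hp.2.le⟩
    have l1 := (Complex.continuous_im.tendsto _).comp hh
    have : (aFun p).im = 0 := by
      refine tendsto_nhds_unique l1 (tendsto_const_nhds.congr fun t => ?_)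
      have := (Complex.le_def.1 ((hd p hp t).1.diag_nonneg (i := idx))).2
      simpa using this
    apply Complex.ext <;> simp [this]
  have hrej : ∀ p ∈ Set.Ioo (0:ℝ) 1,
      Tendsto (fun t => (P * E p t).trace.re) atTop (nhds (1 - (aFun p).re)) := by
    intro p hp
    have := (tends_one hG hP hGP hX _ (hw p hp) (h1 p) hρ₀).sub (hre p hp)
    refine this.congr fun t => ?_
    simp only [Matrix.add_mul, Matrix.trace_add, Complex.add_re, hE]
    ring
  have hm1 : ∀ p ∈ Set.Ioo (0:ℝ) 1, ∀ t,
      (Matrix.single idx idx 1 * E p t).trace.re ≤ (aFun p).re := fun p hp t =>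
    (hG.monotone _ (fun k => (hw p hp k).le) (h1 p) hρ₀).ge_of_tendsto (hre p hp) t
  have hm2 : ∀ p ∈ Set.Ioo (0:ℝ) 1, ∀ t,
      (P * E p t).trace.re ≤ 1 - (aFun p).re := fun p hp t =>
    (hP.monotone _ (fun k => (hw p hp k).le) (h1 p) hρ₀).ge_of_tendsto (hrej p hp) t
  have hct : ∀ (Q : Matrix (Fin S) (Fin S) ℂ) t, Continuous fun p => (Q * E p t).trace.re :=
    fun Q t => Complex.continuous_re.comp
      (continuous_const.matrix_mul (hcont t)).matrix_trace
  have key : ContinuousOn (fun p => (aFun p).re) (Set.Ioo (0:ℝ) 1) := by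
    intro p hp
    refine tendsto_order.2 ⟨fun x hx => ?_, fun x hx => ?_⟩
    · obtain ⟨t, ht⟩ := ((hre p hp).eventually_const_lt hx).exists
      filter_upwards [((hct _ t).continuousWithinAt (s := Set.Ioo 0 1) (x := p)).eventually_const_lt ht,
        self_mem_nhdsWithin] with q hq hq'
      exact hq.trans_le (hm1 q hq' t)
    · have hx' : 1 - x < 1 - (aFun p).re := by linarith
      obtain ⟨t, ht⟩ := ((hrej p hp).eventually_const_lt hx').exists
      filter_upwards [((hct P t).continuousWithinAt (s := Set.Ioo 0 1) (x := p)).eventually_const_lt ht,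
        self_mem_nhdsWithin] with q hq hq'
      have := hm2 q hq' t
      linarith
  exact (Complex.continuous_ofReal.comp_continuousOn key).congr him
end
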